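/- Every proper weak-star closed subspace of H^∞ (with the weak-star topology inherited from L^∞(𝕋,m)) that is invariant under the backward shift f ↦ (f−f(0))/z is of the form K^∞_ϑ for some inner function ϑ. -/

import Mathlib

open MeasureTheory Complex Filter Set Metric Polynomial

noncomputable section

/-- Normalized arc-length measure on the unit circle 𝕋, realized on the
parameter interval `(0, 2π]` via `θ ↦ e^{iθ}`. -/
def arcM : Measure ℝ :=
  (ENNReal.ofReal (2 * Real.pi))⁻¹ • (volume.restrict (Set.Ioc 0 (2 * Real.pi)))

/-- The open unit disc 𝔻 ⊆ ℂ. -/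
def uDisc : Set ℂ := Metric.ball 0 1

/-- The unit circle 𝕋 ⊆ ℂ. -/
def uCircle : Set ℂ := Metric.sphere 0 1

/-- The boundary point `e^{iθ}`. -/
def bpt (θ : ℝ) : ℂ := Complex.exp (θ * Complex.I)

/-- `f` is analytic on the open unit disc. -/
def AnalyticOnDisc (f : ℂ → ℂ) : Prop := DifferentiableOn ℂ f uDisc

/-- The integral mean `∫_𝕋 |f(rζ)|^p dm(ζ)`. -/
def hMean (p : ℝ) (f : ℂ → ℂ) (r : ℝ) : ℝ := ∫ θ, ‖f ((r : ℂ) * bpt θ)‖ ^ p ∂arcM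

/-- Membership in the Hardy space `H^p`, `0 < p < ∞`. -/
def MemHp (p : ℝ) (f : ℂ → ℂ) : Prop :=
  AnalyticOnDisc f ∧ BddAbove (hMean p f '' Set.Ioo 0 1)

/-- The Hardy space (quasi-)norm `‖f‖_{H^p} = (sup_{0<r<1} ∫_𝕋 |f(rζ)|^p dm)^{min(1,1/p)}`. -/
def hardyNorm (p : ℝ) (f : ℂ → ℂ) : ℝ :=
  sSup (hMean p f '' Set.Ioo 0 1) ^ min 1 (1 / p)

/-- Membership in `H^∞`: bounded analytic functions on 𝔻. -/
def MemHinf (f : ℂ → ℂ) : Prop :=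
  AnalyticOnDisc f ∧ ∃ C : ℝ, ∀ z ∈ uDisc, ‖f z‖ ≤ C

/-- `F` is (a representative of) the boundary function of `f` : radial limits a.e. on 𝕋. -/
def BoundaryFn (f : ℂ → ℂ) (F : ℝ → ℂ) : Prop :=
  ∀ᵐ θ ∂arcM, Filter.Tendsto (fun r : ℝ => f ((r : ℂ) * bpt θ))
    (nhdsWithin 1 (Set.Iio 1)) (nhds (F θ))

/-- `ϑ` is an inner function: bounded analytic with unimodular boundary values a.e. -/
def IsInner (ϑ : ℂ → ℂ) : Prop :=
  MemHinf ϑ ∧ ∃ Θ : ℝ → ℂ, BoundaryFn ϑ Θ ∧ ∀ᵐ θ ∂arcM, ‖Θ θ‖ = 1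

/-- The boundary function of `f` lies in `ϑ ⋅ conj(H^p_0)`. -/
def PseudoCont (p : ℝ) (ϑ f : ℂ → ℂ) : Prop :=
  ∃ F Θ G : ℝ → ℂ, ∃ g : ℂ → ℂ,
    BoundaryFn f F ∧ BoundaryFn ϑ Θ ∧ MemHp p g ∧ g 0 = 0 ∧ BoundaryFn g G ∧
    ∀ᵐ θ ∂arcM, F θ = Θ θ * (starRingEnd ℂ) (G θ)

/-- The boundary function of `f` lies in `ϑ ⋅ conj(H^∞_0)`. -/
def PseudoContInf (ϑ f : ℂ → ℂ) : Prop :=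
  ∃ F Θ G : ℝ → ℂ, ∃ g : ℂ → ℂ,
    BoundaryFn f F ∧ BoundaryFn ϑ Θ ∧ MemHinf g ∧ g 0 = 0 ∧ BoundaryFn g G ∧
    ∀ᵐ θ ∂arcM, F θ = Θ θ * (starRingEnd ℂ) (G θ)

/-- `f` extends analytically across the boundary set `S ⊆ 𝕋`. -/
def ExtendsAcross (f : ℂ → ℂ) (S : Set ℂ) : Prop :=
  ∃ U : Set ℂ, ∃ g : ℂ → ℂ, IsOpen U ∧ S ⊆ U ∧
    DifferentiableOn ℂ g (uDisc ∪ U) ∧ Set.EqOn g f uDisc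

/-- The boundary spectrum `σ(ϑ)`: the points of 𝕋 across which `ϑ` admits no
analytic continuation. -/
def bSpectrum (ϑ : ℂ → ℂ) : Set ℂ := {ζ | ζ ∈ uCircle ∧ ¬ ExtendsAcross ϑ {ζ}}

/-- Membership in the space `K^p_ϑ` of pseudocontinuable functions, `0 < p < ∞`:
`f ∈ H^p`, the boundary function of `f` lies in `ϑ ⋅ conj(H^p_0)`, and `f`
continues analytically across `𝕋 ∖ σ(ϑ)`. -/
def MemKp (p : ℝ) (ϑ f : ℂ → ℂ) : Prop :=
  MemHp p f ∧ PseudoCont p ϑ f ∧ ExtendsAcross f (uCircle \ bSpectrum ϑ)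

/-- Membership in `K^∞_ϑ = H^∞ ∩ ϑ ⋅ conj(H^∞_0)`. -/
def MemKinf (ϑ f : ℂ → ℂ) : Prop := MemHinf f ∧ PseudoContInf ϑ f

/-- The backward shift `f ↦ (f - f(0))/z`. -/
def bShift (f : ℂ → ℂ) : ℂ → ℂ :=
  fun z => if z = 0 then deriv f 0 else (f z - f 0) / z

/-- `X ∩ K^p_ϑ` is dense in `K^p_ϑ` in the `H^p` metric. -/
def DenseInKp (p : ℝ) (ϑ : ℂ → ℂ) (X : Set (ℂ → ℂ)) : Prop :=
  ∀ f : ℂ → ℂ, MemKp p ϑ f → ∀ ε > (0 : ℝ), ∃ g ∈ X, MemKp p ϑ g ∧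
    hardyNorm p (fun z => f z - g z) < ε

/-- `X ∩ K^∞_ϑ` is dense in `K^∞_ϑ` in the weak-star topology inherited from
`L^∞(𝕋, m) = (L¹(𝕋, m))^*`. -/
def WStarDenseKinf (ϑ : ℂ → ℂ) (X : Set (ℂ → ℂ)) : Prop :=
  ∀ f : ℂ → ℂ, MemKinf ϑ f → ∀ F : ℝ → ℂ, BoundaryFn f F →
    ∀ (n : ℕ) (h : Fin n → ℝ → ℂ), (∀ i, Integrable (h i) arcM) → ∀ ε > (0 : ℝ),
      ∃ g ∈ X, MemKinf ϑ g ∧ ∃ G : ℝ → ℂ, BoundaryFn g G ∧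
        ∀ i, ‖∫ θ, (F θ - G θ) * h i θ ∂arcM‖ < ε

/-- The weak-star closure of a set `S ⊆ H^∞`, with the weak-star topology inherited from
`L^∞(𝕋,m) = (L¹(𝕋,m))^*`, described via boundary functions: `f` is in the closure iff every
basic weak-star neighborhood of `f` (given by finitely many `L¹` test functions and `ε > 0`)
meets `S`. -/
def HinfWStarClosure (S : Set (ℂ → ℂ)) : Set (ℂ → ℂ) :=
  {f | MemHinf f ∧ ∀ F : ℝ → ℂ, BoundaryFn f F →
    ∀ (n : ℕ) (h : Fin n → ℝ → ℂ), (∀ i, Integrable (h i) arcM) → ∀ ε > (0 : ℝ),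
      ∃ g ∈ S, ∃ G : ℝ → ℂ, BoundaryFn g G ∧
        ∀ i, ‖∫ θ, (F θ - G θ) * h i θ ∂arcM‖ < ε}

open scoped ComplexConjugate Topology ENNReal

/-!
If `f ∈ H^∞` is not in `M`, weak-star closedness provides `k ∈ L¹` that annihilates `M` but not
`f`. To replace `k` by a bounded annihilator, write `C` for the Cauchy transform. Invariance of `M`
under the backward shift gives `C (g k) = g (C k - ∫ k)` for `g ∈ M`; hence for `φ ∈ H^∞` such that
`p = φ C (conj k)` is bounded, `conj p` again annihilates `M`. Take `φ = A / (A + V)` with `V`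
analytic of positive real part, `V 0` small, and, up to an additive constant, `Re V` dominating the
Poisson integral of `k` and `|V|` dominating `C (conj k)`; for large `A` this makes `∫ f conj p` as
close to `∫ f k` as desired.

Therefore `M` is determined by its orthogonal complement in `H²`. This complement is invariant
under the shift, so Beurling's theorem produces an inner function `ϑ` in it that divides all its
elements, and then `M = K^∞_ϑ`.
-/

/-! ### The circle and its normalized arc length -/

lemma norm_bpt (θ : ℝ) : ‖bpt θ‖ = 1 :=
  Complex.norm_exp_ofReal_mul_I θ

lemma bpt_ne_zero (θ : ℝ) : bpt θ ≠ 0 :=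
  Complex.exp_ne_zero _

@[fun_prop]
lemma continuous_bpt : Continuous bpt := by
  unfold bpt; fun_prop

lemma conj_bpt (θ : ℝ) : conj (bpt θ) = (bpt θ)⁻¹ :=
  (Complex.inv_eq_conj (norm_bpt θ)).symm

lemma norm_bpt_zpow (n : ℤ) (θ : ℝ) : ‖bpt θ ^ n‖ = 1 := by
  rw [norm_zpow, norm_bpt, one_zpow]

@[fun_prop]
lemma continuous_bpt_zpow (n : ℤ) : Continuous (fun θ ↦ bpt θ ^ n) :=
  continuous_bpt.zpow₀ n fun θ ↦ .inl (bpt_ne_zero θ)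

lemma mem_uDisc {z : ℂ} : z ∈ uDisc ↔ ‖z‖ < 1 := mem_ball_zero_iff

lemma zero_mem_uDisc : (0 : ℂ) ∈ uDisc := mem_ball_self one_pos

lemma norm_mul_bpt {r : ℝ} (hr : 0 ≤ r) (θ : ℝ) : ‖(r : ℂ) * bpt θ‖ = r := by
  rw [norm_mul, norm_bpt, mul_one, Complex.norm_of_nonneg hr]

lemma mul_bpt_mem_uDisc {r : ℝ} (hr : r ∈ Ico (0 : ℝ) 1) (θ : ℝ) : (r : ℂ) * bpt θ ∈ uDisc :=
  mem_uDisc.2 ((norm_mul_bpt hr.1 θ).trans_lt hr.2)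

lemma continuous_comp_mul_bpt {E : Type*} [TopologicalSpace E] {f : ℂ → E}
    (hf : ContinuousOn f uDisc) {r : ℝ} (hr : r ∈ Ico (0 : ℝ) 1) :
    Continuous fun θ : ℝ ↦ f (r * bpt θ) :=
  hf.comp_continuous (by fun_prop) (mul_bpt_mem_uDisc hr)

instance isProbabilityMeasure_arcM : IsProbabilityMeasure arcM where
  measure_univ := by
    simpa [arcM] using ENNReal.inv_mul_cancel
      (ENNReal.ofReal_pos.2 Real.two_pi_pos).ne' ENNReal.ofReal_ne_top

lemma ae_arcM_mem_Ioo : ∀ᵐ θ ∂arcM, θ ∈ Ioo 0 (2 * Real.pi) := by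
  refine Measure.ae_smul_measure ?_ _
  rw [restrict_Ioo_eq_restrict_Ioc.symm]
  exact ae_restrict_mem measurableSet_Ioo

lemma integrable_arcM_of_continuous {E : Type*} [NormedAddCommGroup E] {f : ℝ → E}
    (hf : Continuous f) : Integrable f arcM :=
  (hf.integrableOn_Ioc).integrable.smul_measure
    (ENNReal.inv_ne_top.2 (ENNReal.ofReal_pos.2 Real.two_pi_pos).ne')

lemma integral_arcM_eq_circleAverage (f : ℂ → ℂ) (r : ℝ) :
    ∫ θ, f (r * bpt θ) ∂arcM = Real.circleAverage f 0 r := by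
  rw [Real.circleAverage_def, intervalIntegral.integral_of_le Real.two_pi_pos.le, arcM,
    integral_smul_measure, ENNReal.toReal_inv, ENNReal.toReal_ofReal Real.two_pi_pos.le]
  simp [circleMap, bpt]

theorem AnalyticOnDisc.integral_mul_bpt {f : ℂ → ℂ} (hf : AnalyticOnDisc f) {r : ℝ}
    (hr : r ∈ Ico (0 : ℝ) 1) : ∫ θ, f (r * bpt θ) ∂arcM = f 0 := by
  rw [integral_arcM_eq_circleAverage]
  refine DiffContOnCl.circleAverage (DifferentiableOn.diffContOnCl (hf.mono ?_))
  rw [abs_of_nonneg hr.1]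
  exact closure_ball_subset_closedBall.trans (closedBall_subset_ball hr.2)

lemma integral_bpt_zpow_of_ne_zero {n : ℤ} (hn : n ≠ 0) : ∫ θ, bpt θ ^ n ∂arcM = 0 := by
  have average : Real.circleAverage (fun z : ℂ ↦ z ^ n) 0 1 = 0 := by
    rw [Real.circleAverage_eq_circleIntegral one_ne_zero]
    have integrand (z : ℂ) (hz : z ∈ sphere (0 : ℂ) 1) :
        (z - 0)⁻¹ • z ^ n = (z - 0) ^ (n - 1) := by
      rw [sub_zero, zpow_sub_one₀ (ne_of_mem_sphere hz one_ne_zero), smul_eq_mul, mul_comm]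
    rw [circleIntegral.integral_congr zero_le_one integrand,
      circleIntegral.integral_sub_zpow_of_ne (by lia), smul_zero]
  simpa using (integral_arcM_eq_circleAverage (fun z ↦ z ^ n) 1).trans average

/-! ### Fourier coefficients, Cauchy transforms and Poisson integrals -/

/-- The `n`-th Fourier coefficient `∫ u(ζ) ζ⁻ⁿ dm(ζ)` of a function `u` on the circle, given in
the angular variable. -/
def arcCoeff (u : ℝ → ℂ) (n : ℤ) : ℂ := ∫ θ, u θ * bpt θ ^ (-n) ∂arcM

/-- The Cauchy kernel `1 / (1 - w ζ⁻¹)` at `ζ = e^{iθ}`. -/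
def cauchyKernel (w : ℂ) (θ : ℝ) : ℂ := (1 - w * (bpt θ)⁻¹)⁻¹

/-- The Cauchy transform `w ↦ ∫ u(ζ) / (1 - w ζ⁻¹) dm(ζ)`, the analytic projection of `u`. -/
def cauchyTransform (u : ℝ → ℂ) (w : ℂ) : ℂ := ∫ θ, u θ * cauchyKernel w θ ∂arcM

/-- The Poisson integral of a function on the unit circle. -/
def poissonIntegral (u : ℝ → ℂ) (w : ℂ) : ℂ := ∫ θ, u θ * poissonKernel 0 w (bpt θ) ∂arcM

lemma integrable_conj {α : Type*} [MeasurableSpace α] {μ : Measure α} {u : α → ℂ}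
    (hu : Integrable u μ) : Integrable (fun x ↦ conj (u x)) μ :=
  conjCLE.toContinuousLinearMap.integrable_comp hu

section Kernels

variable {u : ℝ → ℂ} {w : ℂ}

lemma integrable_mul_bpt_zpow (hu : Integrable u arcM) (n : ℤ) :
    Integrable (fun θ ↦ u θ * bpt θ ^ n) arcM :=
  hu.mul_bdd (continuous_bpt_zpow n).aestronglyMeasurable (ae_of_all _ fun θ ↦
    (norm_bpt_zpow n θ).le)

lemma norm_arcCoeff_le (u : ℝ → ℂ) (n : ℤ) : ‖arcCoeff u n‖ ≤ ∫ θ, ‖u θ‖ ∂arcM := by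
  simpa only [arcCoeff, norm_mul, norm_bpt_zpow, mul_one] using
    norm_integral_le_integral_norm (μ := arcM) fun θ ↦ u θ * bpt θ ^ (-n)

lemma arcCoeff_zero (u : ℝ → ℂ) : arcCoeff u 0 = ∫ θ, u θ ∂arcM := by simp [arcCoeff]

lemma arcCoeff_conj (u : ℝ → ℂ) (n : ℤ) :
    arcCoeff (fun θ ↦ conj (u θ)) n = conj (arcCoeff u (-n)) := by
  simp [arcCoeff, ← integral_conj, conj_bpt]

lemma one_sub_norm_le_norm_one_sub_mul_inv_bpt (w : ℂ) (θ : ℝ) :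
    1 - ‖w‖ ≤ ‖1 - w * (bpt θ)⁻¹‖ := by
  simpa [norm_bpt] using norm_sub_norm_le (1 : ℂ) (w * (bpt θ)⁻¹)

lemma one_sub_mul_inv_bpt_ne_zero (hw : w ∈ uDisc) (θ : ℝ) : 1 - w * (bpt θ)⁻¹ ≠ 0 :=
  norm_pos_iff.1 <|
    (sub_pos.2 (mem_uDisc.1 hw)).trans_le (one_sub_norm_le_norm_one_sub_mul_inv_bpt w θ)

lemma continuous_cauchyKernel (hw : w ∈ uDisc) : Continuous (cauchyKernel w) :=
  (continuous_const.sub (continuous_const.mul (continuous_bpt.inv₀ bpt_ne_zero))).inv₀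
    (one_sub_mul_inv_bpt_ne_zero hw)

lemma norm_cauchyKernel_le (hw : w ∈ uDisc) (θ : ℝ) : ‖cauchyKernel w θ‖ ≤ (1 - ‖w‖)⁻¹ := by
  rw [cauchyKernel, norm_inv]
  exact inv_anti₀ (sub_pos.2 (mem_uDisc.1 hw)) (one_sub_norm_le_norm_one_sub_mul_inv_bpt w θ)

lemma integrable_mul_cauchyKernel (hu : Integrable u arcM) (hw : w ∈ uDisc) :
    Integrable (fun θ ↦ u θ * cauchyKernel w θ) arcM :=
  hu.mul_bdd (continuous_cauchyKernel hw).aestronglyMeasurable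
    (ae_of_all _ (norm_cauchyKernel_le hw))

lemma cauchyTransform_zero (u : ℝ → ℂ) : cauchyTransform u 0 = ∫ θ, u θ ∂arcM := by
  simp [cauchyTransform, cauchyKernel]

lemma norm_cauchyTransform_le (hu : Integrable u arcM) (hw : w ∈ uDisc) :
    ‖cauchyTransform u w‖ ≤ (∫ θ, ‖u θ‖ ∂arcM) * (1 - ‖w‖)⁻¹ := by
  rw [← integral_mul_const]
  refine norm_integral_le_of_norm_le (hu.norm.mul_const _) (ae_of_all _ fun θ ↦ ?_)
  rw [norm_mul]
  gcongr
  exact norm_cauchyKernel_le hw θ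

theorem hasSum_cauchyTransform (hu : Integrable u arcM) (hw : w ∈ uDisc) :
    HasSum (fun n : ℕ ↦ arcCoeff u n * w ^ n) (cauchyTransform u w) := by
  have hw1 : ‖w‖ < 1 := mem_uDisc.1 hw
  have term_eq (n : ℕ) : arcCoeff u n * w ^ n = ∫ θ, u θ * (w * (bpt θ)⁻¹) ^ n ∂arcM := by
    rw [arcCoeff, ← integral_mul_const]
    congr 1 with θ
    rw [mul_pow, zpow_neg, zpow_natCast, inv_pow]
    ring
  have norm_term (n : ℕ) (θ : ℝ) : ‖u θ * (w * (bpt θ)⁻¹) ^ n‖ = ‖u θ‖ * ‖w‖ ^ n := by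
    simp [norm_bpt]
  simp_rw [term_eq]
  refine hasSum_integral_of_dominated_convergence (fun n θ ↦ ‖u θ‖ * ‖w‖ ^ n) (fun n ↦ ?_)
    (fun n ↦ ae_of_all _ fun θ ↦ (norm_term n θ).le) (ae_of_all _ fun θ ↦ ?_) ?_
    (ae_of_all _ fun θ ↦ ?_)
  · exact hu.1.mul (((continuous_const.mul
      (continuous_bpt.inv₀ bpt_ne_zero)).pow n).aestronglyMeasurable)
  · exact (summable_geometric_of_lt_one (norm_nonneg w) hw1).mul_left _
  · simpa only [tsum_mul_left] using hu.norm.mul_const _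
  · have geometric : HasSum (fun n : ℕ ↦ (w * (bpt θ)⁻¹) ^ n) (cauchyKernel w θ) :=
      hasSum_geometric_of_norm_lt_one (by simpa [norm_bpt] using hw1)
    exact geometric.mul_left (u θ)

lemma differentiableOn_tsum_mul_pow {a : ℕ → ℂ} {B : ℝ} (ha : ∀ n, ‖a n‖ ≤ B) :
    DifferentiableOn ℂ (fun w ↦ ∑' n, a n * w ^ n) (ball 0 1) := by
  intro w hw
  obtain ⟨ρ, hwρ, hρ⟩ := exists_between (mem_ball_zero_iff.1 hw)
  have hρ0 : 0 ≤ ρ := (norm_nonneg w).trans hwρ.le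
  have differentiableOn_ball : DifferentiableOn ℂ (fun w ↦ ∑' n, a n * w ^ n) (ball 0 ρ) := by
    refine differentiableOn_tsum_of_summable_norm (u := fun n ↦ B * ρ ^ n)
      ((summable_geometric_of_lt_one hρ0 hρ).mul_left _) (fun n ↦ by fun_prop) isOpen_ball ?_
    intro n z hz
    rw [norm_mul, norm_pow]
    exact mul_le_mul (ha n) (pow_le_pow_left₀ (norm_nonneg z) (mem_ball_zero_iff.1 hz).le n)
      (by positivity) ((norm_nonneg _).trans (ha n))
  exact (differentiableOn_ball.differentiableAt
    (isOpen_ball.mem_nhds (mem_ball_zero_iff.2 hwρ))).differentiableWithinAt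

theorem analyticOnDisc_cauchyTransform (hu : Integrable u arcM) :
    AnalyticOnDisc (cauchyTransform u) :=
  (differentiableOn_tsum_mul_pow fun n ↦ norm_arcCoeff_le u n).congr fun _ hw ↦
    (hasSum_cauchyTransform hu hw).tsum_eq.symm

lemma poissonKernel_bpt (w : ℂ) (θ : ℝ) :
    poissonKernel 0 w (bpt θ) = (1 - ‖w‖ ^ 2) / ‖bpt θ - w‖ ^ 2 := by
  simp [poissonKernel, norm_bpt]

lemma poissonKernel_bpt_nonneg (hw : w ∈ uDisc) (θ : ℝ) : 0 ≤ poissonKernel 0 w (bpt θ) := by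
  have := mem_uDisc.1 hw
  rw [poissonKernel_bpt]
  exact div_nonneg (by nlinarith [norm_nonneg w]) (by positivity)

lemma poissonKernel_bpt_eq (hw : w ∈ uDisc) (θ : ℝ) :
    (poissonKernel 0 w (bpt θ) : ℂ) = cauchyKernel w θ + conj (cauchyKernel w θ) - 1 := by
  have herglotz : herglotzRieszKernel 0 w (bpt θ) = 2 * cauchyKernel w θ - 1 := by
    have h := one_sub_mul_inv_bpt_ne_zero hw θ
    have hb := bpt_ne_zero θ
    have hbw : bpt θ - w ≠ 0 := by
      contrapose! h
      rw [← sub_eq_zero.1 h, mul_inv_cancel₀ hb, sub_self]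
    rw [herglotzRieszKernel, cauchyKernel, sub_zero, sub_zero]
    field_simp
    ring
  rw [poissonKernel_eq_re_herglotzRieszKernel, Function.comp_apply, herglotz, add_conj]
  simp

lemma continuous_poissonKernel_bpt (hw : w ∈ uDisc) :
    Continuous fun θ ↦ poissonKernel 0 w (bpt θ) := by
  refine isometry_ofReal.isEmbedding.continuous_iff.2 ?_
  simp_rw [Function.comp_def, poissonKernel_bpt_eq hw]
  have := continuous_cauchyKernel hw
  fun_prop

lemma integrable_mul_poissonKernel (hu : Integrable u arcM) (hw : w ∈ uDisc) :
    Integrable (fun θ ↦ u θ * poissonKernel 0 w (bpt θ)) arcM := by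
  have hC := continuous_cauchyKernel hw
  have expand (θ : ℝ) : u θ * poissonKernel 0 w (bpt θ)
      = u θ * cauchyKernel w θ + u θ * conj (cauchyKernel w θ) - u θ := by
    rw [poissonKernel_bpt_eq hw]; ring
  simp_rw [expand]
  refine ((integrable_mul_cauchyKernel hu hw).add ?_).sub hu
  exact hu.mul_bdd (continuous_conj.comp hC).aestronglyMeasurable
    (ae_of_all _ fun θ ↦ (RCLike.norm_conj _).trans_le (norm_cauchyKernel_le hw θ))

theorem poissonIntegral_eq (hu : Integrable u arcM) (hw : w ∈ uDisc) :
    poissonIntegral u w = cauchyTransform u w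
      + conj (cauchyTransform (fun θ ↦ conj (u θ)) w) - ∫ θ, u θ ∂arcM := by
  have hconj : Integrable (fun θ ↦ conj (u θ)) arcM := integrable_conj hu
  have hint := integrable_conj (integrable_mul_cauchyKernel hconj hw)
  simp only [poissonIntegral, cauchyTransform, ← integral_conj]
  rw [← integral_add (integrable_mul_cauchyKernel hu hw) hint,
    ← integral_sub ((integrable_mul_cauchyKernel hu hw).fun_add hint) hu]
  congr 1 with θ
  rw [poissonKernel_bpt_eq hw, map_mul, conj_conj]
  ring

end Kernels

section Poisson

variable {u v : ℝ → ℂ} {w : ℂ} {r : ℝ}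

theorem poissonIntegral_comp_bpt {f : ℂ → ℂ} (hf : DiffContOnCl ℂ f (ball 0 1))
    (hw : w ∈ uDisc) : poissonIntegral (fun θ ↦ f (bpt θ)) w = f w := by
  rw [← hf.circleAverage_poissonKernel_smul hw, ← integral_arcM_eq_circleAverage, poissonIntegral]
  congr 1 with θ
  simp [mul_comm]

lemma poissonIntegral_const (c : ℂ) (hw : w ∈ uDisc) : poissonIntegral (fun _ ↦ c) w = c :=
  poissonIntegral_comp_bpt (f := fun _ ↦ c) diffContOnCl_const hw

lemma integrable_poissonKernel_bpt (hw : w ∈ uDisc) :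
    Integrable (fun θ ↦ poissonKernel 0 w (bpt θ)) arcM :=
  integrable_arcM_of_continuous (continuous_poissonKernel_bpt hw)

lemma integral_poissonKernel_bpt (hw : w ∈ uDisc) : ∫ θ, poissonKernel 0 w (bpt θ) ∂arcM = 1 := by
  have h := poissonIntegral_const 1 hw
  simp only [poissonIntegral, one_mul, integral_complex_ofReal] at h
  exact_mod_cast h

lemma norm_mul_poissonKernel (hw : w ∈ uDisc) (u : ℝ → ℂ) (θ : ℝ) :
    ‖u θ * poissonKernel 0 w (bpt θ)‖ = ‖u θ‖ * poissonKernel 0 w (bpt θ) := by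
  rw [norm_mul, Complex.norm_of_nonneg (poissonKernel_bpt_nonneg hw θ)]

lemma norm_poissonIntegral_le (hw : w ∈ uDisc) (u : ℝ → ℂ) :
    ‖poissonIntegral u w‖ ≤ ∫ θ, ‖u θ‖ * poissonKernel 0 w (bpt θ) ∂arcM := by
  simpa only [poissonIntegral, norm_mul_poissonKernel hw] using
    norm_integral_le_integral_norm (μ := arcM) fun θ ↦ u θ * poissonKernel 0 w (bpt θ)

lemma norm_poissonIntegral_le_of_forall_le {C : ℝ} (hu : ∀ᵐ θ ∂arcM, ‖u θ‖ ≤ C)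
    (hw : w ∈ uDisc) : ‖poissonIntegral u w‖ ≤ C := by
  refine (norm_integral_le_of_norm_le ((integrable_poissonKernel_bpt hw).const_mul C) ?_).trans_eq
    (by rw [integral_const_mul, integral_poissonKernel_bpt hw, mul_one])
  filter_upwards [hu] with θ hθ
  rw [norm_mul_poissonKernel hw]
  exact mul_le_mul_of_nonneg_right hθ (poissonKernel_bpt_nonneg hw θ)

lemma poissonIntegral_sub (hu : Integrable u arcM) (hv : Integrable v arcM) (hw : w ∈ uDisc) :
    poissonIntegral (fun θ ↦ u θ - v θ) w = poissonIntegral u w - poissonIntegral v w := by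
  simp only [poissonIntegral, sub_mul]
  exact integral_sub (integrable_mul_poissonKernel hu hw) (integrable_mul_poissonKernel hv hw)

lemma continuousOn_poissonIntegral (hu : Integrable u arcM) :
    ContinuousOn (poissonIntegral u) uDisc := by
  have hC := (analyticOnDisc_cauchyTransform hu).continuousOn
  have hC' := (analyticOnDisc_cauchyTransform (integrable_conj hu)).continuousOn
  exact ((hC.add (continuous_conj.comp_continuousOn hC')).sub continuousOn_const).congr
    fun w hw ↦ poissonIntegral_eq hu hw

lemma norm_bpt_sub_mul_bpt_sq (r θ t : ℝ) :
    ‖bpt t - r * bpt θ‖ ^ 2 = 1 - 2 * r * Real.cos (t - θ) + r ^ 2 := by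
  rw [← normSq_eq_norm_sq, normSq_apply, Real.cos_sub]
  simp only [bpt, sub_re, sub_im, exp_ofReal_mul_I_re, exp_ofReal_mul_I_im, re_ofReal_mul,
    im_ofReal_mul]
  linear_combination Real.sin_sq_add_cos_sq t + r ^ 2 * Real.sin_sq_add_cos_sq θ

lemma poissonKernel_mul_bpt (r θ t : ℝ) : poissonKernel 0 (r * bpt θ) (bpt t)
    = (1 - r ^ 2) / (1 - 2 * r * Real.cos (t - θ) + r ^ 2) := by
  rw [poissonKernel_bpt, norm_bpt_sub_mul_bpt_sq, norm_mul, norm_bpt, mul_one, norm_real,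
    Real.norm_eq_abs, sq_abs]

lemma poissonKernel_ofReal_bpt (r t : ℝ) : poissonKernel 0 r (bpt t)
    = (1 - r ^ 2) / (1 - 2 * r * Real.cos t + r ^ 2) := by
  simpa [bpt] using poissonKernel_mul_bpt r 0 t

lemma poissonKernel_mul_bpt_eq_dist (r θ t : ℝ) :
    poissonKernel 0 (r * bpt θ) (bpt t) = poissonKernel 0 r (bpt (dist t θ)) := by
  rw [poissonKernel_mul_bpt, poissonKernel_ofReal_bpt, Real.dist_eq, Real.cos_abs]

lemma poissonKernel_mul_bpt_comm (r θ t : ℝ) :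
    poissonKernel 0 (r * bpt θ) (bpt t) = poissonKernel 0 (r * bpt t) (bpt θ) := by
  rw [poissonKernel_mul_bpt_eq_dist, poissonKernel_mul_bpt_eq_dist, dist_comm]

lemma one_sub_sq_le (hr : 0 ≤ r) (t : ℝ) :
    (1 - r) ^ 2 ≤ 1 - 2 * r * Real.cos t + r ^ 2 := by
  nlinarith [mul_le_mul_of_nonneg_left (Real.cos_le_one t) hr]

lemma poissonKernel_ofReal_bpt_le_of_cos_le (hr : r ∈ Ico (0 : ℝ) 1) {s t : ℝ}
    (h : Real.cos t ≤ Real.cos s) : poissonKernel 0 r (bpt t) ≤ poissonKernel 0 r (bpt s) := by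
  have hpos : 0 < 1 - 2 * r * Real.cos s + r ^ 2 :=
    (pow_pos (sub_pos.2 hr.2) 2).trans_le (one_sub_sq_le hr.1 s)
  have hr2 : 0 ≤ 1 - r ^ 2 := by nlinarith [hr.1, hr.2]
  rw [poissonKernel_ofReal_bpt, poissonKernel_ofReal_bpt]
  gcongr
  linarith [hr.1]

theorem integral_poissonIntegral_mul (hu : Integrable u arcM) (hv : Integrable v arcM)
    (hr : r ∈ Ico (0 : ℝ) 1) :
    ∫ θ, poissonIntegral u (r * bpt θ) * v θ ∂arcM
      = ∫ θ, u θ * poissonIntegral v (r * bpt θ) ∂arcM := by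
  have hK : Continuous fun z : ℝ × ℝ ↦ (poissonKernel 0 (r * bpt z.1) (bpt z.2) : ℂ) := by
    simp_rw [poissonKernel_mul_bpt]
    refine continuous_ofReal.comp (Continuous.div (by fun_prop) (by fun_prop) fun z ↦ ?_)
    exact ((pow_pos (sub_pos.2 hr.2) 2).trans_le (one_sub_sq_le hr.1 _)).ne'
  have hK_le (z : ℝ × ℝ) : ‖(poissonKernel 0 (r * bpt z.1) (bpt z.2) : ℂ)‖
      ≤ poissonKernel 0 r (bpt 0) := by
    rw [Complex.norm_of_nonneg (poissonKernel_bpt_nonneg (mul_bpt_mem_uDisc hr _) _),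
      poissonKernel_mul_bpt_eq_dist]
    exact poissonKernel_ofReal_bpt_le_of_cos_le hr (by simpa using Real.cos_le_one _)
  have hint : Integrable (fun z : ℝ × ℝ ↦
      v z.1 * u z.2 * poissonKernel 0 (r * bpt z.1) (bpt z.2)) (arcM.prod arcM) :=
    (hv.mul_prod hu).mul_bdd hK.aestronglyMeasurable (ae_of_all _ hK_le)
  calc ∫ θ, poissonIntegral u (r * bpt θ) * v θ ∂arcM
      = ∫ θ, ∫ t, v θ * u t * poissonKernel 0 (r * bpt θ) (bpt t) ∂arcM ∂arcM := by
        simp only [poissonIntegral, ← integral_mul_const]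
        congr! 4
        ring
    _ = ∫ t, ∫ θ, v θ * u t * poissonKernel 0 (r * bpt θ) (bpt t) ∂arcM ∂arcM :=
        integral_integral_swap hint
    _ = ∫ t, u t * poissonIntegral v (r * bpt t) ∂arcM := by
        simp only [poissonIntegral, ← integral_const_mul]
        congr! 4
        rw [poissonKernel_mul_bpt_comm]
        ring

lemma poissonIntegral_ofReal (a : ℝ → ℝ) (w : ℂ) : poissonIntegral (fun θ ↦ a θ) w
    = (∫ θ, a θ * poissonKernel 0 w (bpt θ) ∂arcM : ℝ) := by
  simp only [poissonIntegral, ← ofReal_mul, integral_complex_ofReal]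

lemma integral_norm_poissonIntegral_le (hu : Integrable u arcM) (hr : r ∈ Ico (0 : ℝ) 1) :
    ∫ θ, ‖poissonIntegral u (r * bpt θ)‖ ∂arcM ≤ ∫ θ, ‖u θ‖ ∂arcM := by
  have hu' : Integrable (fun θ ↦ (‖u θ‖ : ℂ)) arcM := hu.norm.ofReal
  have hcont := continuous_comp_mul_bpt (continuousOn_poissonIntegral hu') hr
  calc ∫ θ, ‖poissonIntegral u (r * bpt θ)‖ ∂arcM
      ≤ ∫ θ, (poissonIntegral (fun t ↦ (‖u t‖ : ℂ)) (r * bpt θ)).re ∂arcM := by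
        refine integral_mono (integrable_arcM_of_continuous (continuous_comp_mul_bpt
          (continuousOn_poissonIntegral hu) hr).norm)
          (integrable_arcM_of_continuous (continuous_re.comp hcont)) fun θ ↦ ?_
        rw [poissonIntegral_ofReal, ofReal_re]
        exact norm_poissonIntegral_le (mul_bpt_mem_uDisc hr θ) u
    _ = (∫ θ, poissonIntegral (fun t ↦ (‖u t‖ : ℂ)) (r * bpt θ) * 1 ∂arcM).re := by
        simpa using integral_re (𝕜 := ℂ) (integrable_arcM_of_continuous hcont)
    _ = ∫ θ, ‖u θ‖ ∂arcM := by
        rw [integral_poissonIntegral_mul hu' (integrable_const 1) hr]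
        simp only [poissonIntegral_const 1 (mul_bpt_mem_uDisc hr _), mul_one,
          integral_complex_ofReal, ofReal_re]

lemma poissonIntegral_conj (u : ℝ → ℂ) (w : ℂ) :
    poissonIntegral (fun θ ↦ conj (u θ)) w = conj (poissonIntegral u w) := by
  simp [poissonIntegral, ← integral_conj]

lemma poissonIntegral_cauchyKernel {z : ℂ} (hw : w ∈ uDisc) (hz : z ∈ uDisc) :
    poissonIntegral (cauchyKernel w) z = (1 - w * conj z)⁻¹ := by
  have ne_zero (z : ℂ) (hz : ‖z‖ ≤ 1) : 1 - conj w * z ≠ 0 := by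
    intro h
    have : ‖conj w * z‖ = 1 := by rw [← sub_eq_zero.1 h, norm_one]
    rw [norm_mul, RCLike.norm_conj] at this
    nlinarith [mem_uDisc.1 hw, norm_nonneg w]
  have hf : DiffContOnCl ℂ (fun z ↦ (1 - conj w * z)⁻¹) (ball 0 1) := by
    refine DifferentiableOn.diffContOnCl fun z hz ↦ DifferentiableAt.differentiableWithinAt ?_
    refine DifferentiableAt.inv (by fun_prop) (ne_zero z ?_)
    exact mem_closedBall_zero_iff.1 (closure_ball_subset_closedBall hz)
  have conj_eq (θ : ℝ) : cauchyKernel w θ = conj (1 - conj w * bpt θ)⁻¹ := by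
    simp [cauchyKernel, conj_bpt]
  simp_rw [funext conj_eq, poissonIntegral_conj]
  rw [poissonIntegral_comp_bpt hf hz]
  simp

theorem cauchyTransform_poissonIntegral (hu : Integrable u arcM) (hr : r ∈ Ico (0 : ℝ) 1)
    (hw : w ∈ uDisc) :
    cauchyTransform (fun θ ↦ poissonIntegral u (r * bpt θ)) w = cauchyTransform u (r * w) := by
  rw [cauchyTransform, integral_poissonIntegral_mul hu
    (integrable_arcM_of_continuous (continuous_cauchyKernel hw)) hr, cauchyTransform]
  congr 1 with θ
  rw [poissonIntegral_cauchyKernel hw (mul_bpt_mem_uDisc hr θ), cauchyKernel, map_mul, conj_ofReal,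
    conj_bpt]
  ring

end Poisson

/-! ### Fatou's theorem -/

lemma lintegral_comp_dist_le_of_closedBall_le {α : Type*} [PseudoMetricSpace α]
    [MeasurableSpace α] [OpensMeasurableSpace α] {μ ν : Measure α} {x : α} {δ : ℝ}
    (h : ∀ s ∈ Icc 0 δ, μ (closedBall x s) ≤ ν (closedBall x s)) {K : ℝ → ℝ}
    (hK : ContinuousOn K (Icc 0 δ)) (hK_anti : AntitoneOn K (Icc 0 δ))
    (hK_nonneg : ∀ s ∈ Icc 0 δ, 0 ≤ K s) :
    ∫⁻ t in closedBall x δ, ENNReal.ofReal (K (dist t x)) ∂μ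
      ≤ ∫⁻ t in closedBall x δ, ENNReal.ofReal (K (dist t x)) ∂ν := by
  have maps : MapsTo (dist · x) (closedBall x δ) (Icc 0 δ) := fun t ht ↦ ⟨dist_nonneg, ht⟩
  have layer_cake (ρ : Measure α) : ∫⁻ t in closedBall x δ, ENNReal.ofReal (K (dist t x)) ∂ρ
      = ∫⁻ y in Ioi 0, ρ ({t | y ≤ K (dist t x)} ∩ closedBall x δ) := by
    rw [lintegral_eq_lintegral_meas_le]
    · simp only [Measure.restrict_apply' measurableSet_closedBall]
    · exact (ae_restrict_mem measurableSet_closedBall).mono fun t ht ↦ hK_nonneg _ (maps ht)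
    · exact (hK.comp (by fun_prop) maps).aemeasurable measurableSet_closedBall
  rw [layer_cake μ, layer_cake ν]
  refine lintegral_mono fun y ↦ ?_
  -- Since `K` is antitone and continuous, its superlevel sets in the ball are closed balls.
  rcases (Icc 0 δ ∩ K ⁻¹' Ici y).eq_empty_or_nonempty with hJ | hJ
  · have : {t | y ≤ K (dist t x)} ∩ closedBall x δ = ∅ :=
      eq_empty_of_forall_notMem fun t ht ↦ hJ.subset ⟨maps ht.2, ht.1⟩
    simp [this]
  · obtain ⟨s, ⟨hs, hys⟩, hmax⟩ := (hK.preimage_isClosed_of_isClosed isClosed_Icc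
      isClosed_Ici |> isCompact_Icc.of_isClosed_subset <| inter_subset_left).exists_isGreatest hJ
    have : {t | y ≤ K (dist t x)} ∩ closedBall x δ = closedBall x s :=
      Subset.antisymm (fun t ht ↦ hmax ⟨maps ht.2, ht.1⟩) fun t ht ↦
        ⟨(mem_Ici.1 hys).trans (hK_anti ⟨dist_nonneg, ht.trans hs.2⟩ hs ht),
          closedBall_subset_closedBall hs.2 ht⟩
    rw [this]
    exact h s hs

lemma ae_eventually_setLIntegral_closedBall_le {μ : Measure ℝ} [IsLocallyFiniteMeasure μ]
    {E : Type*} [NormedAddCommGroup E] {u : ℝ → E} (hu : LocallyIntegrable u μ) :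
    ∀ᵐ x ∂μ, ∀ ε : ℝ≥0∞, ε ≠ 0 → ε ≠ ∞ → ∀ᶠ s in 𝓝[>] 0,
      ∫⁻ t in closedBall x s, ‖u t - u x‖ₑ ∂μ ≤ ε * μ (closedBall x s) := by
  filter_upwards [(Besicovitch.vitaliFamily μ).ae_tendsto_lintegral_enorm_sub_div hu]
    with x hx ε hε hε_top
  filter_upwards [(hx.comp (Besicovitch.tendsto_filterAt μ x)).eventually_le_const hε.bot_lt]
    with s hs
  exact (ENNReal.div_le_iff_le_mul (.inr hε_top) (.inr hε)).1 hs

lemma antitoneOn_poissonKernel_ofReal_bpt {r : ℝ} (hr : r ∈ Ico (0 : ℝ) 1) :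
    AntitoneOn (fun t : ℝ ↦ poissonKernel 0 r (bpt t)) (Icc 0 Real.pi) := fun _ hs _ ht hst ↦
  poissonKernel_ofReal_bpt_le_of_cos_le hr (Real.antitoneOn_cos hs ht hst)

lemma tendsto_poissonKernel_ofReal_bpt {δ : ℝ} (hδ : δ ∈ Ioc 0 Real.pi) :
    Tendsto (fun r : ℝ ↦ poissonKernel 0 r (bpt δ)) (𝓝[<] 1) (𝓝 0) := by
  simp_rw [poissonKernel_ofReal_bpt]
  have hcos : Real.cos δ < 1 := by
    simpa using Real.cos_lt_cos_of_nonneg_of_le_pi le_rfl hδ.2 hδ.1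
  have hne : 1 - 2 * (1 : ℝ) * Real.cos δ + 1 ^ 2 ≠ 0 := by linarith
  have : ContinuousAt (fun r : ℝ ↦ (1 - r ^ 2) / (1 - 2 * r * Real.cos δ + r ^ 2)) 1 :=
    ContinuousAt.div (by fun_prop) (by fun_prop) hne
  simpa using this.tendsto.mono_left nhdsWithin_le_nhds

lemma cos_le_cos_of_mem_Icc {δ d : ℝ} (hδ : 0 ≤ δ) (hd : d ∈ Icc δ (2 * Real.pi - δ)) :
    Real.cos d ≤ Real.cos δ := by
  rcases le_total d Real.pi with h | h
  · exact Real.cos_le_cos_of_nonneg_of_le_pi hδ h hd.1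
  · rw [← Real.cos_two_pi_sub d]
    exact Real.cos_le_cos_of_nonneg_of_le_pi hδ (by linarith) (by linarith [hd.2])

section Fatou

variable {u : ℝ → ℂ} {r θ δ : ℝ}

lemma enorm_poissonIntegral_sub_le_lintegral (hu : Integrable u arcM) (hr : r ∈ Ico (0 : ℝ) 1)
    (θ : ℝ) : ‖poissonIntegral u (r * bpt θ) - u θ‖ₑ
      ≤ ∫⁻ t, ‖u t - u θ‖ₑ * ENNReal.ofReal (poissonKernel 0 r (bpt (dist t θ))) ∂arcM := by
  have hw := mul_bpt_mem_uDisc hr θ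
  have eq : poissonIntegral u (r * bpt θ) - u θ
      = ∫ t, (u t - u θ) * poissonKernel 0 (r * bpt θ) (bpt t) ∂arcM := by
    conv_lhs => rw [← poissonIntegral_const (u θ) hw,
      ← poissonIntegral_sub hu (integrable_const _) hw, poissonIntegral]
  rw [eq]
  refine (enorm_integral_le_lintegral_enorm _).trans_eq (lintegral_congr fun t ↦ ?_)
  rw [enorm_mul, ← poissonKernel_mul_bpt_eq_dist, ← ofReal_norm (poissonKernel _ _ _ : ℂ),
    Complex.norm_of_nonneg (poissonKernel_bpt_nonneg hw t)]

lemma setLIntegral_closedBall_poissonKernel_le (hu : Integrable u arcM)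
    (hr : r ∈ Ico (0 : ℝ) 1) (hδ : δ ≤ Real.pi) {ε : ℝ≥0∞}
    (h : ∀ s ∈ Icc 0 δ, ∫⁻ t in closedBall θ s, ‖u t - u θ‖ₑ ∂arcM ≤ ε * arcM (closedBall θ s)) :
    ∫⁻ t in closedBall θ δ,
      ‖u t - u θ‖ₑ * ENNReal.ofReal (poissonKernel 0 r (bpt (dist t θ))) ∂arcM ≤ ε := by
  have hr0 : (r : ℂ) ∈ uDisc := by simpa [bpt] using mul_bpt_mem_uDisc hr 0
  have hK := continuous_poissonKernel_bpt hr0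
  have hdens : AEMeasurable (fun t ↦ ‖u t - u θ‖ₑ) arcM :=
    (hu.1.sub aestronglyMeasurable_const).enorm
  calc _ = ∫⁻ t in closedBall θ δ, ENNReal.ofReal (poissonKernel 0 r (bpt (dist t θ)))
        ∂(arcM.withDensity fun t ↦ ‖u t - u θ‖ₑ) := by
        rw [restrict_withDensity measurableSet_closedBall,
          lintegral_withDensity_eq_lintegral_mul₀ hdens.restrict]
        · rfl
        · exact (ENNReal.continuous_ofReal.comp (hK.comp (by fun_prop))).aemeasurable
    _ ≤ ∫⁻ t in closedBall θ δ, ENNReal.ofReal (poissonKernel 0 r (bpt (dist t θ)))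
        ∂(ε • arcM) := by
        refine lintegral_comp_dist_le_of_closedBall_le (fun s hs ↦ ?_)
          (K := fun t ↦ poissonKernel 0 r (bpt t)) hK.continuousOn
          ((antitoneOn_poissonKernel_ofReal_bpt hr).mono (Icc_subset_Icc_right hδ))
          fun s _ ↦ poissonKernel_bpt_nonneg hr0 s
        rw [withDensity_apply _ measurableSet_closedBall]
        exact h s hs
    _ ≤ ε * ∫⁻ t, ENNReal.ofReal (poissonKernel 0 (r * bpt θ) (bpt t)) ∂arcM := by
        simp_rw [Measure.restrict_smul, lintegral_smul_measure, poissonKernel_mul_bpt_eq_dist]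
        exact mul_le_mul_right (setLIntegral_le_lintegral _ _) ε
    _ = ε := by
        have hw := mul_bpt_mem_uDisc hr θ
        rw [← ofReal_integral_eq_lintegral_ofReal (integrable_poissonKernel_bpt hw)
          (ae_of_all _ (poissonKernel_bpt_nonneg hw)), integral_poissonKernel_bpt hw,
          ENNReal.ofReal_one, mul_one]

lemma setLIntegral_compl_closedBall_poissonKernel_le (u : ℝ → ℂ) (hr : r ∈ Ico (0 : ℝ) 1)
    (hδ : 0 ≤ δ) (hθ : θ ∈ Icc δ (2 * Real.pi - δ)) :
    ∫⁻ t in (closedBall θ δ)ᶜ,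
      ‖u t - u θ‖ₑ * ENNReal.ofReal (poissonKernel 0 r (bpt (dist t θ))) ∂arcM
        ≤ (∫⁻ t, ‖u t - u θ‖ₑ ∂arcM) * ENNReal.ofReal (poissonKernel 0 r (bpt δ)) := by
  rw [← lintegral_mul_const' _ _ ENNReal.ofReal_ne_top]
  refine (setLIntegral_mono_ae' measurableSet_closedBall.compl ?_).trans
    (setLIntegral_le_lintegral _ _)
  filter_upwards [ae_arcM_mem_Ioo] with t ht htθ
  gcongr
  refine poissonKernel_ofReal_bpt_le_of_cos_le hr (cos_le_cos_of_mem_Icc hδ ⟨?_, ?_⟩)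
  · exact (lt_of_not_ge fun h ↦ htθ h).le
  · rw [Real.dist_eq, abs_le]
    constructor <;> linarith [ht.1, ht.2, hθ.1, hθ.2]

theorem boundaryFn_poissonIntegral (hu : Integrable u arcM) :
    BoundaryFn (poissonIntegral u) u := by
  filter_upwards [ae_arcM_mem_Ioo, ae_eventually_setLIntegral_closedBall_le hu.locallyIntegrable]
    with θ hθ hLeb
  rw [tendsto_iff_edist_tendsto_0]
  refine ENNReal.tendsto_nhds_zero.2 fun ε hε ↦ ?_
  wlog hε_top : ε ≠ ∞
  · simp [not_not.1 hε_top]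
  have hε2 : ε / 2 ≠ 0 := (ENNReal.half_pos hε.ne').ne'
  obtain ⟨δ₀, hδ₀, hball⟩ := mem_nhdsGT_iff_exists_Ioc_subset.1
    (hLeb (ε / 2) hε2 (ENNReal.div_ne_top hε_top two_ne_zero))
  let δ := min δ₀ (min θ (2 * Real.pi - θ))
  have hδ : 0 < δ := lt_min hδ₀ (lt_min hθ.1 (sub_pos.2 hθ.2))
  have hδ_min : δ ≤ min θ (2 * Real.pi - θ) := min_le_right _ _
  rw [le_min_iff] at hδ_min
  have near_zero : ∀ s ∈ Icc 0 δ, ∫⁻ t in closedBall θ s, ‖u t - u θ‖ₑ ∂arcM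
      ≤ ε / 2 * arcM (closedBall θ s) := by
    intro s hs
    rcases hs.1.eq_or_lt with rfl | hs0
    · simp
    · exact hball ⟨hs0, hs.2.trans (min_le_left _ _)⟩
  have far : Tendsto (fun r : ℝ ↦ (∫⁻ t, ‖u t - u θ‖ₑ ∂arcM)
      * ENNReal.ofReal (poissonKernel 0 r (bpt δ))) (𝓝[<] 1) (𝓝 0) := by
    have hfin : ∫⁻ t, ‖u t - u θ‖ₑ ∂arcM ≠ ∞ := (hu.sub (integrable_const (u θ))).2.ne
    simpa using ENNReal.Tendsto.const_mul
      (ENNReal.tendsto_ofReal (tendsto_poissonKernel_ofReal_bpt ⟨hδ, by linarith⟩)) (.inr hfin)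
  filter_upwards [Ico_mem_nhdsLT zero_lt_one, far.eventually_le_const hε2.bot_lt] with r hr hfar
  calc edist (poissonIntegral u (r * bpt θ)) (u θ)
      ≤ ∫⁻ t, ‖u t - u θ‖ₑ * ENNReal.ofReal (poissonKernel 0 r (bpt (dist t θ))) ∂arcM := by
        rw [edist_eq_enorm_sub]
        exact enorm_poissonIntegral_sub_le_lintegral hu hr θ
    _ = _ := (lintegral_add_compl _ measurableSet_closedBall).symm
    _ ≤ ε / 2 + ε / 2 := add_le_add
        (setLIntegral_closedBall_poissonKernel_le hu hr (by linarith) near_zero)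
        ((setLIntegral_compl_closedBall_poissonKernel_le u hr hδ.le
          ⟨hδ_min.1, by linarith⟩).trans hfar)
    _ = ε := ENNReal.add_halves ε

end Fatou

lemma integral_norm_sub_le_add {α E : Type*} [MeasurableSpace α] {μ : Measure α}
    [NormedAddCommGroup E] {a b c : α → E} (ha : Integrable a μ) (hb : Integrable b μ)
    (hc : Integrable c μ) :
    ∫ x, ‖a x - c x‖ ∂μ ≤ (∫ x, ‖a x - b x‖ ∂μ) + ∫ x, ‖b x - c x‖ ∂μ :=
  (integral_mono (ha.sub hc).norm ((ha.sub hb).norm.add (hb.sub hc).norm) fun x ↦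
    norm_sub_le_norm_sub_add_norm_sub (a x) (b x) (c x)).trans_eq
      (integral_add (ha.sub hb).norm (hb.sub hc).norm)

section PoissonConvergence

variable {u : ℝ → ℂ}

lemma integrable_poissonIntegral_mul_bpt (hu : Integrable u arcM) {r : ℝ}
    (hr : r ∈ Ico (0 : ℝ) 1) : Integrable (fun θ : ℝ ↦ poissonIntegral u (r * bpt θ)) arcM :=
  integrable_arcM_of_continuous (continuous_comp_mul_bpt (continuousOn_poissonIntegral hu) hr)

lemma tendsto_integral_norm_poissonIntegral_sub_of_bounded {C : ℝ} (hu : Integrable u arcM)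
    (hC : ∀ᵐ θ ∂arcM, ‖u θ‖ ≤ C) :
    Tendsto (fun r : ℝ ↦ ∫ θ, ‖poissonIntegral u (r * bpt θ) - u θ‖ ∂arcM) (𝓝[<] 1) (𝓝 0) := by
  rw [← integral_zero ℝ ℝ (μ := arcM)]
  refine tendsto_integral_filter_of_dominated_convergence (fun _ ↦ C + C) ?_ ?_
    (integrable_const _) ?_
  · filter_upwards [Ico_mem_nhdsLT zero_lt_one] with r hr
    exact ((integrable_poissonIntegral_mul_bpt hu hr).sub hu).1.norm
  · filter_upwards [Ico_mem_nhdsLT zero_lt_one] with r hr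
    filter_upwards [hC] with θ hθ
    rw [norm_norm]
    exact (norm_sub_le _ _).trans
      (add_le_add (norm_poissonIntegral_le_of_forall_le hC (mul_bpt_mem_uDisc hr θ)) hθ)
  · filter_upwards [boundaryFn_poissonIntegral hu] with θ hθ
    exact tendsto_iff_norm_sub_tendsto_zero.1 hθ

theorem tendsto_integral_norm_poissonIntegral_sub (hu : Integrable u arcM) :
    Tendsto (fun r : ℝ ↦ ∫ θ, ‖poissonIntegral u (r * bpt θ) - u θ‖ ∂arcM) (𝓝[<] 1) (𝓝 0) := by
  refine tendsto_order.2 ⟨fun a ha ↦ .of_forall fun r ↦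
    ha.trans_le (integral_nonneg fun _ ↦ norm_nonneg _), fun ε hε ↦ ?_⟩
  obtain ⟨g, hug, hg⟩ := hu.exists_boundedContinuous_integral_sub_le (ε := ε / 3) (by positivity)
  have hlim := tendsto_integral_norm_poissonIntegral_sub_of_bounded hg
    (ae_of_all _ g.norm_coe_le_norm)
  filter_upwards [Ico_mem_nhdsLT zero_lt_one, hlim.eventually_lt_const (by positivity : 0 < ε / 3)]
    with r hr hgr
  have hPu := integrable_poissonIntegral_mul_bpt hu hr
  have hPg := integrable_poissonIntegral_mul_bpt hg hr
  have contraction : ∫ θ, ‖poissonIntegral u (r * bpt θ) - poissonIntegral g (r * bpt θ)‖ ∂arcM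
      ≤ ε / 3 := by
    simp_rw [← poissonIntegral_sub hu hg (mul_bpt_mem_uDisc hr _)]
    exact (integral_norm_poissonIntegral_le (hu.sub hg) hr).trans hug
  simp_rw [norm_sub_rev (u _)] at hug
  have triangle := integral_norm_sub_le_add hPu hg hu
  have triangle' := integral_norm_sub_le_add hPu hPg hg
  linarith

end PoissonConvergence

/-! ### Functions of analytic type -/

lemma BoundaryFn.ae_eq {f : ℂ → ℂ} {F G : ℝ → ℂ} (hF : BoundaryFn f F) (hG : BoundaryFn f G) :
    F =ᵐ[arcM] G := by
  filter_upwards [hF, hG] with θ h₁ h₂ using tendsto_nhds_unique h₁ h₂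

lemma BoundaryFn.congr {f g : ℂ → ℂ} {F : ℝ → ℂ} (hF : BoundaryFn f F) (h : EqOn f g uDisc) :
    BoundaryFn g F := by
  filter_upwards [hF] with θ hθ
  refine hθ.congr' ?_
  filter_upwards [Ico_mem_nhdsLT zero_lt_one] with r hr using h (mul_bpt_mem_uDisc hr θ)

lemma BoundaryFn.congr_ae {f : ℂ → ℂ} {F G : ℝ → ℂ} (hF : BoundaryFn f F) (h : F =ᵐ[arcM] G) :
    BoundaryFn f G := by
  filter_upwards [hF, h] with θ hθ hFG using hFG ▸ hθ

lemma cauchyTransform_eq_integral {u : ℝ → ℂ} (hu : Integrable u arcM)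
    (h : ∀ n : ℤ, 0 < n → arcCoeff u n = 0) {w : ℂ} (hw : w ∈ uDisc) :
    cauchyTransform u w = ∫ θ, u θ ∂arcM := by
  refine (hasSum_cauchyTransform hu hw).unique ?_
  rw [← arcCoeff_zero]
  convert hasSum_single (f := fun n : ℕ ↦ arcCoeff u n * w ^ n) 0 fun n hn ↦ ?_ using 1
  · simp
  · rw [h n (by lia), zero_mul]

/-- Functions of analytic type, i.e. integrable functions on the circle whose negative Fourier
coefficients vanish: the boundary functions of the Hardy space `H¹`. -/
structure IsAnalyticType (u : ℝ → ℂ) : Prop where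
  integrable : Integrable u arcM
  arcCoeff_eq_zero : ∀ n < 0, arcCoeff u n = 0

namespace IsAnalyticType

variable {u : ℝ → ℂ}

lemma poissonIntegral_eq (hu : IsAnalyticType u) :
    EqOn (poissonIntegral u) (cauchyTransform u) uDisc := by
  intro w hw
  have hconj : cauchyTransform (fun θ ↦ conj (u θ)) w = conj (∫ θ, u θ ∂arcM) := by
    rw [← integral_conj]
    refine cauchyTransform_eq_integral (integrable_conj hu.integrable) (fun n hn ↦ ?_) hw
    rw [arcCoeff_conj, hu.arcCoeff_eq_zero _ (neg_lt_zero.2 hn), map_zero]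
  rw [_root_.poissonIntegral_eq hu.integrable hw, hconj, conj_conj, add_sub_cancel_right]

lemma boundaryFn_cauchyTransform (hu : IsAnalyticType u) : BoundaryFn (cauchyTransform u) u :=
  (boundaryFn_poissonIntegral hu.integrable).congr hu.poissonIntegral_eq

lemma memHinf_cauchyTransform (hu : IsAnalyticType u) {C : ℝ} (hC : ∀ᵐ θ ∂arcM, ‖u θ‖ ≤ C) :
    MemHinf (cauchyTransform u) :=
  ⟨analyticOnDisc_cauchyTransform hu.integrable, C, fun _ hw ↦
    hu.poissonIntegral_eq hw ▸ norm_poissonIntegral_le_of_forall_le hC hw⟩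

end IsAnalyticType

theorem ae_eq_zero_of_arcCoeff_eq_zero {u : ℝ → ℂ} (hu : Integrable u arcM)
    (h : ∀ n, arcCoeff u n = 0) : u =ᵐ[arcM] 0 := by
  have hu' : IsAnalyticType u := ⟨hu, fun n _ ↦ h n⟩
  refine hu'.boundaryFn_cauchyTransform.ae_eq (ae_of_all _ fun θ ↦ tendsto_const_nhds.congr' ?_)
  filter_upwards [Ico_mem_nhdsLT zero_lt_one] with r hr
  rw [cauchyTransform_eq_integral hu (fun n _ ↦ h n) (mul_bpt_mem_uDisc hr θ), ← arcCoeff_zero,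
    h 0, Pi.zero_apply]

/-! ### Boundary functions of bounded analytic functions -/

lemma exists_inner_eq_of_tendsto_inner {𝕜 H ι : Type*} [RCLike 𝕜] [NormedAddCommGroup H]
    [InnerProductSpace 𝕜 H] [CompleteSpace H] (l : Filter ι) [l.NeBot] {x : ι → H} {C : ℝ}
    (hx : ∀ i, ‖x i‖ ≤ C) :
    ∃ y : H, ∀ h c, Tendsto (fun i ↦ inner 𝕜 (x i) h) l (𝓝 c) → inner 𝕜 y h = c := by
  let U := Ultrafilter.of l
  let φ : ι → WeakDual 𝕜 H := fun i ↦
    StrongDual.toWeakDual (InnerProductSpace.toDual 𝕜 H (x i))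
  have hball : WeakDual.toStrongDual ⁻¹' closedBall 0 C ∈ U.map φ :=
    mem_map.2 (univ_mem' fun i ↦ by simpa [φ] using hx i)
  obtain ⟨ψ, -, hψ⟩ := (WeakDual.isCompact_closedBall (𝕜 := 𝕜) (E := H) 0 C).ultrafilter_le_nhds
    (U.map φ) (le_principal_iff.2 hball)
  refine ⟨(InnerProductSpace.toDual 𝕜 H).symm (WeakDual.toStrongDual ψ), fun h c hc ↦ ?_⟩
  have hψh : Tendsto (fun i ↦ φ i h) U (𝓝 (ψ h)) :=
    ((WeakDual.eval_continuous h).tendsto ψ).comp hψ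
  rw [InnerProductSpace.toDual_symm_apply]
  exact tendsto_nhds_unique hψh (hc.mono_left (Ultrafilter.of_le l))

lemma exists_seq_mem_Ico_tendsto_nhdsLT :
    ∃ s : ℕ → ℝ, (∀ n, s n ∈ Ico (0 : ℝ) 1) ∧ Tendsto s atTop (𝓝[<] 1) := by
  obtain ⟨s, -, hs, hlim⟩ := exists_seq_strictMono_tendsto' (zero_lt_one (α := ℝ))
  exact ⟨s, fun n ↦ Ioo_subset_Ico_self (hs n),
    tendsto_nhdsWithin_iff.2 ⟨hlim, .of_forall fun n ↦ (hs n).2⟩⟩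

lemma memLp_two_of_continuous {f : ℝ → ℂ} (hf : Continuous f) : MemLp f 2 arcM :=
  (memLp_two_iff_integrable_sq_norm hf.aestronglyMeasurable).2
    (integrable_arcM_of_continuous (by fun_prop))

namespace AnalyticOnDisc

variable {f : ℂ → ℂ}

lemma poissonIntegral_mul_bpt (hf : AnalyticOnDisc f) {r : ℝ} (hr : r ∈ Ico (0 : ℝ) 1) {w : ℂ}
    (hw : w ∈ uDisc) : poissonIntegral (fun θ ↦ f (r * bpt θ)) w = f (r * w) := by
  refine poissonIntegral_comp_bpt (f := fun z ↦ f (r * z)) (DifferentiableOn.diffContOnCl ?_) hw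
  refine hf.comp (by fun_prop) fun z hz ↦ mem_uDisc.2 ?_
  rw [closure_ball _ one_ne_zero, mem_closedBall_zero_iff] at hz
  rw [norm_mul, Complex.norm_of_nonneg hr.1]
  exact (mul_le_of_le_one_right hr.1 hz).trans_lt hr.2

lemma tendsto_mul (hf : AnalyticOnDisc f) {w : ℂ} (hw : w ∈ uDisc) :
    Tendsto (fun r : ℝ ↦ f (r * w)) (𝓝[<] 1) (𝓝 (f w)) := by
  have hfw : ContinuousAt f ((1 : ℝ) * w) := by
    rw [ofReal_one, one_mul]
    exact (hf.differentiableAt (isOpen_ball.mem_nhds hw)).continuousAt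
  have : ContinuousAt (fun r : ℝ ↦ f (r * w)) 1 :=
    ContinuousAt.comp (f := fun r : ℝ ↦ (r : ℂ) * w) hfw (by fun_prop)
  simpa using this.tendsto.mono_left nhdsWithin_le_nhds

end AnalyticOnDisc

namespace MemHinf

variable {f : ℂ → ℂ}

theorem exists_boundaryFn (hf : MemHinf f) : ∃ F, BoundaryFn f F := by
  obtain ⟨C, hC⟩ := hf.2
  obtain ⟨s, hs, hs_lim⟩ := exists_seq_mem_Ico_tendsto_nhdsLT
  have dilate_memLp (n : ℕ) : MemLp (fun θ : ℝ ↦ f (s n * bpt θ)) 2 arcM :=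
    .of_bound (continuous_comp_mul_bpt hf.1.continuousOn (hs n)).aestronglyMeasurable C
      (ae_of_all _ fun θ ↦ hC _ (mul_bpt_mem_uDisc (hs n) θ))
  obtain ⟨y, hy⟩ := exists_inner_eq_of_tendsto_inner (𝕜 := ℂ) atTop
    (x := fun n ↦ (dilate_memLp n).toLp) (C := C) fun n ↦ by
      refine (Lp.norm_le_of_ae_bound ((norm_nonneg _).trans (hC 0 zero_mem_uDisc)) ?_).trans_eq
        (by simp [measureUnivNNReal])
      filter_upwards [(dilate_memLp n).coeFn_toLp] with θ hθ
      exact hθ ▸ hC _ (mul_bpt_mem_uDisc (hs n) θ)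
  refine ⟨y, (boundaryFn_poissonIntegral ((Lp.memLp y).integrable one_le_two)).congr
    fun w hw ↦ ?_⟩
  have kernel_memLp : MemLp (fun θ ↦ (poissonKernel 0 w (bpt θ) : ℂ)) 2 arcM :=
    memLp_two_of_continuous (continuous_ofReal.comp (continuous_poissonKernel_bpt hw))
  have inner_kernel (v : Lp ℂ 2 arcM) :
      inner ℂ v kernel_memLp.toLp = conj (poissonIntegral v w) := by
    rw [L2.inner_def, poissonIntegral, ← integral_conj]
    refine integral_congr_ae ?_
    filter_upwards [kernel_memLp.coeFn_toLp] with θ hθ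
    simp [hθ, RCLike.inner_apply, mul_comm]
  have lim : Tendsto (fun n ↦ inner ℂ (dilate_memLp n).toLp kernel_memLp.toLp) atTop
      (𝓝 (conj (f w))) := by
    refine ((continuous_conj.tendsto _).comp ((hf.1.tendsto_mul hw).comp hs_lim)).congr fun n ↦ ?_
    rw [inner_kernel, Function.comp_apply, Function.comp_apply,
      ← hf.1.poissonIntegral_mul_bpt (hs n) hw]
    refine congrArg conj (integral_congr_ae ?_)
    filter_upwards [(dilate_memLp n).coeFn_toLp] with θ hθ
    rw [hθ]
  have := hy _ _ lim
  rw [inner_kernel] at this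
  exact star_injective this

end MemHinf

namespace BoundaryFn

variable {f g : ℂ → ℂ} {F G k : ℝ → ℂ} {C : ℝ}

lemma add (hF : BoundaryFn f F) (hG : BoundaryFn g G) :
    BoundaryFn (fun z ↦ f z + g z) fun θ ↦ F θ + G θ := by
  filter_upwards [hF, hG] with θ hf hg using hf.add hg

lemma mul (hF : BoundaryFn f F) (hG : BoundaryFn g G) :
    BoundaryFn (fun z ↦ f z * g z) fun θ ↦ F θ * G θ := by
  filter_upwards [hF, hG] with θ hf hg using hf.mul hg

lemma const (c : ℂ) : BoundaryFn (fun _ ↦ c) fun _ ↦ c :=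
  ae_of_all _ fun _ ↦ tendsto_const_nhds

lemma conj_comp (hF : BoundaryFn f F) : BoundaryFn (fun z ↦ conj (f z)) fun θ ↦ conj (F θ) := by
  filter_upwards [hF] with θ hf using (continuous_conj.tendsto _).comp hf

lemma of_continuousOn_compl_zero (hf : ContinuousOn f {0}ᶜ) : BoundaryFn f fun θ ↦ f (bpt θ) := by
  refine ae_of_all _ fun θ ↦ ?_
  have hfθ : ContinuousAt f ((1 : ℝ) * bpt θ) :=
    hf.continuousAt (isOpen_compl_singleton.mem_nhds (by simp [bpt_ne_zero]))
  have : ContinuousAt (fun r : ℝ ↦ f (r * bpt θ)) 1 :=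
    ContinuousAt.comp (f := fun r : ℝ ↦ (r : ℂ) * bpt θ) hfθ (by fun_prop)
  simpa using this.tendsto.mono_left nhdsWithin_le_nhds

lemma aestronglyMeasurable (hF : BoundaryFn f F) (hf : ContinuousOn f uDisc) :
    AEStronglyMeasurable F arcM := by
  obtain ⟨s, hs, hs_lim⟩ := exists_seq_mem_Ico_tendsto_nhdsLT
  refine aestronglyMeasurable_of_tendsto_ae atTop (f := fun n θ ↦ f (s n * bpt θ))
    (fun n ↦ (continuous_comp_mul_bpt hf (hs n)).aestronglyMeasurable) ?_
  filter_upwards [hF] with θ hθ using hθ.comp hs_lim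

lemma norm_le (hF : BoundaryFn f F) (hC : ∀ z ∈ uDisc, ‖f z‖ ≤ C) : ∀ᵐ θ ∂arcM, ‖F θ‖ ≤ C := by
  filter_upwards [hF] with θ hθ
  refine le_of_tendsto hθ.norm ?_
  filter_upwards [Ico_mem_nhdsLT zero_lt_one] with r hr using hC _ (mul_bpt_mem_uDisc hr θ)

lemma tendsto_integral_mul (hF : BoundaryFn f F) (hf : ContinuousOn f uDisc)
    (hC : ∀ z ∈ uDisc, ‖f z‖ ≤ C) (hk : Integrable k arcM) :
    Tendsto (fun r : ℝ ↦ ∫ θ, f (r * bpt θ) * k θ ∂arcM) (𝓝[<] 1) (𝓝 (∫ θ, F θ * k θ ∂arcM)) := by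
  refine tendsto_integral_filter_of_dominated_convergence (fun θ ↦ C * ‖k θ‖) ?_ ?_
    (hk.norm.const_mul C) ?_
  · filter_upwards [Ico_mem_nhdsLT zero_lt_one] with r hr
    exact (continuous_comp_mul_bpt hf hr).aestronglyMeasurable.mul hk.1
  · filter_upwards [Ico_mem_nhdsLT zero_lt_one] with r hr
    refine ae_of_all _ fun θ ↦ ?_
    rw [norm_mul]
    exact mul_le_mul_of_nonneg_right (hC _ (mul_bpt_mem_uDisc hr θ)) (norm_nonneg _)
  · filter_upwards [hF] with θ hθ using hθ.mul_const (k θ)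

lemma tendsto_integral_mul_poissonIntegral (hF : BoundaryFn f F) (hf : ContinuousOn f uDisc)
    (hC : ∀ z ∈ uDisc, ‖f z‖ ≤ C) (hk : Integrable k arcM) :
    Tendsto (fun r : ℝ ↦ ∫ θ, f (r * bpt θ) * poissonIntegral k (r * bpt θ) ∂arcM) (𝓝[<] 1)
      (𝓝 (∫ θ, F θ * k θ ∂arcM)) := by
  have hlim := tendsto_integral_norm_poissonIntegral_sub hk
  have error : Tendsto (fun r : ℝ ↦ ∫ θ, f (r * bpt θ) * (poissonIntegral k (r * bpt θ) - k θ)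
      ∂arcM) (𝓝[<] 1) (𝓝 0) := by
    refine squeeze_zero_norm' ?_ (by simpa using hlim.const_mul C)
    filter_upwards [Ico_mem_nhdsLT zero_lt_one] with r hr
    rw [← integral_const_mul]
    refine norm_integral_le_of_norm_le
      (((integrable_poissonIntegral_mul_bpt hk hr).sub hk).norm.const_mul C)
      (ae_of_all _ fun θ ↦ ?_)
    rw [norm_mul]
    exact mul_le_mul_of_nonneg_right (hC _ (mul_bpt_mem_uDisc hr θ)) (norm_nonneg _)
  rw [← zero_add (∫ θ, F θ * k θ ∂arcM)]
  refine (error.add (hF.tendsto_integral_mul hf hC hk)).congr' ?_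
  filter_upwards [Ico_mem_nhdsLT zero_lt_one] with r hr
  have hfr : AEStronglyMeasurable (fun θ : ℝ ↦ f (r * bpt θ)) arcM :=
    (continuous_comp_mul_bpt hf hr).aestronglyMeasurable
  have hfC : ∀ᵐ θ ∂arcM, ‖f (r * bpt θ)‖ ≤ C := ae_of_all _ fun θ ↦ hC _ (mul_bpt_mem_uDisc hr θ)
  have hsub : Integrable (fun θ ↦ poissonIntegral k (r * bpt θ) - k θ) arcM :=
    (integrable_poissonIntegral_mul_bpt hk hr).sub hk
  rw [← integral_add (hsub.bdd_mul hfr hfC) (hk.bdd_mul hfr hfC)]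
  congr 1 with θ
  ring

lemma tendsto_integral (hF : BoundaryFn f F) (hf : ContinuousOn f uDisc)
    (hC : ∀ z ∈ uDisc, ‖f z‖ ≤ C) :
    Tendsto (fun r : ℝ ↦ ∫ θ, f (r * bpt θ) ∂arcM) (𝓝[<] 1) (𝓝 (∫ θ, F θ ∂arcM)) := by
  simpa using hF.tendsto_integral_mul hf hC (integrable_const 1)

end BoundaryFn

namespace MemHinf

variable {f g : ℂ → ℂ} {F k : ℝ → ℂ}

lemma mul (hf : MemHinf f) (hg : MemHinf g) : MemHinf fun z ↦ f z * g z := by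
  obtain ⟨hf, C, hC⟩ := hf
  obtain ⟨hg, D, hD⟩ := hg
  refine ⟨hf.mul hg, C * D, fun z hz ↦ ?_⟩
  rw [norm_mul]
  exact mul_le_mul (hC z hz) (hD z hz) (norm_nonneg _) ((norm_nonneg _).trans (hC z hz))

lemma pow (n : ℕ) : MemHinf fun z ↦ z ^ n :=
  ⟨(differentiable_pow n).differentiableOn, 1, fun z hz ↦ by
    rw [norm_pow]; exact pow_le_one₀ (norm_nonneg _) (mem_uDisc.1 hz).le⟩

lemma integrable_boundaryFn_mul (hf : MemHinf f) (hF : BoundaryFn f F) (hk : Integrable k arcM) :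
    Integrable (fun θ ↦ F θ * k θ) arcM := by
  obtain ⟨C, hC⟩ := hf.2
  exact hk.bdd_mul (hF.aestronglyMeasurable hf.1.continuousOn) (hF.norm_le hC)

lemma memLp_boundaryFn (hf : MemHinf f) (hF : BoundaryFn f F) (p : ℝ≥0∞) : MemLp F p arcM := by
  obtain ⟨C, hC⟩ := hf.2
  exact .of_bound (hF.aestronglyMeasurable hf.1.continuousOn) C (hF.norm_le hC)

lemma integral_boundaryFn (hf : MemHinf f) (hF : BoundaryFn f F) : ∫ θ, F θ ∂arcM = f 0 := by
  obtain ⟨C, hC⟩ := hf.2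
  refine tendsto_nhds_unique (hF.tendsto_integral hf.1.continuousOn hC)
    (tendsto_const_nhds.congr' ?_)
  filter_upwards [Ico_mem_nhdsLT zero_lt_one] with r hr using (hf.1.integral_mul_bpt hr).symm

lemma isAnalyticType_boundaryFn (hf : MemHinf f) (hF : BoundaryFn f F) : IsAnalyticType F := by
  refine ⟨memLp_one_iff_integrable.1 (hf.memLp_boundaryFn hF 1), fun n hn ↦ ?_⟩
  obtain ⟨m, rfl⟩ : ∃ m : ℕ, n = -m := ⟨n.natAbs, by lia⟩
  have hmul := hF.mul (BoundaryFn.of_continuousOn_compl_zero (continuous_pow m).continuousOn)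
  simpa [arcCoeff, show m ≠ 0 by lia] using (hf.mul (.pow m)).integral_boundaryFn hmul

end MemHinf

/-! ### Analytic majorants and multipliers -/

/-- `V` has positive real part and, up to the constant `D`, dominates the Poisson integral of `k`
by its real part and the Cauchy transform of `conj k` by its modulus. -/
structure IsMajorant (k : ℝ → ℂ) (V : ℂ → ℂ) (D : ℝ) : Prop where
  analyticOnDisc : AnalyticOnDisc V
  re_pos : ∀ w ∈ uDisc, 0 < (V w).re
  norm_cauchyTransform_le : ∀ w ∈ uDisc, ‖cauchyTransform (fun θ ↦ conj (k θ)) w‖ ≤ D + ‖V w‖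
  norm_poissonIntegral_le : ∀ w ∈ uDisc, ‖poissonIntegral k w‖ ≤ D + (V w).re

lemma cauchyTransform_add {u v : ℝ → ℂ} (hu : Integrable u arcM) (hv : Integrable v arcM) {w : ℂ}
    (hw : w ∈ uDisc) :
    cauchyTransform (fun θ ↦ u θ + v θ) w = cauchyTransform u w + cauchyTransform v w := by
  simp only [cauchyTransform, add_mul]
  exact integral_add (integrable_mul_cauchyKernel hu hw) (integrable_mul_cauchyKernel hv hw)

lemma poissonIntegral_add {u v : ℝ → ℂ} (hu : Integrable u arcM) (hv : Integrable v arcM) {w : ℂ}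
    (hw : w ∈ uDisc) :
    poissonIntegral (fun θ ↦ u θ + v θ) w = poissonIntegral u w + poissonIntegral v w := by
  simp only [poissonIntegral, add_mul]
  exact integral_add (integrable_mul_poissonKernel hu hw) (integrable_mul_poissonKernel hv hw)

lemma cauchyTransform_const_mul (c : ℂ) (u : ℝ → ℂ) (w : ℂ) :
    cauchyTransform (fun θ ↦ c * u θ) w = c * cauchyTransform u w := by
  simp only [cauchyTransform, mul_assoc, integral_const_mul]

lemma poissonIntegral_const_mul (c : ℂ) (u : ℝ → ℂ) (w : ℂ) :
    poissonIntegral (fun θ ↦ c * u θ) w = c * poissonIntegral u w := by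
  simp only [poissonIntegral, mul_assoc, integral_const_mul]

lemma norm_poissonIntegral_le_of_integrable {u : ℝ → ℂ} (hu : Integrable u arcM) {w : ℂ}
    (hw : w ∈ uDisc) :
    ‖poissonIntegral u w‖ ≤ 3 * ((∫ θ, ‖u θ‖ ∂arcM) * (1 - ‖w‖)⁻¹) := by
  have hB : 0 ≤ ∫ θ, ‖u θ‖ ∂arcM := integral_nonneg fun θ ↦ norm_nonneg _
  have h₁ := norm_cauchyTransform_le hu hw
  have h₂ := norm_cauchyTransform_le (integrable_conj hu) hw
  have h₃ : ‖∫ θ, u θ ∂arcM‖ ≤ (∫ θ, ‖u θ‖ ∂arcM) * (1 - ‖w‖)⁻¹ :=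
    (norm_integral_le_integral_norm _).trans <| le_mul_of_one_le_right hB <|
      (one_le_inv₀ (sub_pos.2 (mem_uDisc.1 hw))).2 (sub_le_self _ (norm_nonneg _))
  simp only [RCLike.norm_conj] at h₂
  rw [poissonIntegral_eq hu hw]
  refine (norm_sub_le _ _).trans ((add_le_add_left (norm_add_le _ _) _).trans ?_)
  rw [RCLike.norm_conj]
  linarith

section Sqrt

variable {z w : ℂ}

lemma complex_sqrt_sq (z : ℂ) : z.sqrt ^ 2 = z := cpow_ofNat_inv_pow z 2

lemma abs_im_sqrt_le_re_sqrt (hz : 0 ≤ z.re) : |z.sqrt.im| ≤ z.sqrt.re := by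
  have re_nonneg : 0 ≤ z.sqrt.re := by
    rw [Complex.sqrt, cpow_inv_two_re]
    positivity
  have re_sq : z.re = z.sqrt.re ^ 2 - z.sqrt.im ^ 2 := by
    conv_lhs => rw [← complex_sqrt_sq z]
    simp [pow_two]
  exact abs_le_of_sq_le_sq (by linarith [sq_nonneg z.sqrt.im]) re_nonneg

lemma re_add_re_le_re_sqrt_add_sqrt_sq (hz : 0 ≤ z.re) (hw : 0 ≤ w.re) :
    z.re + w.re ≤ ((z.sqrt + w.sqrt) ^ 2).re := by
  have h : |z.sqrt.im * w.sqrt.im| ≤ z.sqrt.re * w.sqrt.re :=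
    abs_mul z.sqrt.im _ ▸ mul_le_mul (abs_im_sqrt_le_re_sqrt hz) (abs_im_sqrt_le_re_sqrt hw)
      (abs_nonneg _) ((abs_nonneg _).trans (abs_im_sqrt_le_re_sqrt hz))
  have re_eq : ((z.sqrt + w.sqrt) ^ 2).re
      = z.re + w.re + 2 * (z.sqrt.re * w.sqrt.re - z.sqrt.im * w.sqrt.im) := by
    rw [add_sq, complex_sqrt_sq, complex_sqrt_sq]
    simp only [add_re, mul_re, re_ofNat, im_ofNat, mul_im]
    ring
  linarith [le_abs_self (z.sqrt.im * w.sqrt.im)]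

lemma norm_add_norm_le_norm_sqrt_add_sqrt_sq (hz : 0 ≤ z.re) (hw : 0 ≤ w.re) :
    ‖z‖ + ‖w‖ ≤ ‖(z.sqrt + w.sqrt) ^ 2‖ := by
  have h : |z.sqrt.im * w.sqrt.im| ≤ z.sqrt.re * w.sqrt.re :=
    abs_mul z.sqrt.im _ ▸ mul_le_mul (abs_im_sqrt_le_re_sqrt hz) (abs_im_sqrt_le_re_sqrt hw)
      (abs_nonneg _) ((abs_nonneg _).trans (abs_im_sqrt_le_re_sqrt hz))
  have norm_eq (v : ℂ) : ‖v‖ = v.sqrt.re ^ 2 + v.sqrt.im ^ 2 := by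
    rw [← complex_sqrt_sq v, norm_pow, complex_sqrt_sq, Complex.sq_norm, normSq_apply]
    ring
  rw [norm_eq z, norm_eq w, norm_pow, Complex.sq_norm, normSq_apply]
  simp only [add_re, add_im]
  linarith [neg_abs_le (z.sqrt.im * w.sqrt.im)]

lemma norm_sqrt_add_sqrt_sq_le (z w : ℂ) : ‖(z.sqrt + w.sqrt) ^ 2‖ ≤ 2 * (‖z‖ + ‖w‖) := by
  calc ‖(z.sqrt + w.sqrt) ^ 2‖ ≤ (‖z.sqrt‖ + ‖w.sqrt‖) ^ 2 := by
        rw [norm_pow]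
        gcongr
        exact norm_add_le _ _
    _ ≤ 2 * (‖z.sqrt‖ ^ 2 + ‖w.sqrt‖ ^ 2) := add_sq_le
    _ = 2 * (‖z‖ + ‖w‖) := by rw [← norm_pow, ← norm_pow, complex_sqrt_sq, complex_sqrt_sq]

end Sqrt

namespace IsMajorant

variable {k₁ k₂ k : ℝ → ℂ} {V₁ V₂ V : ℂ → ℂ} {D₁ D₂ D : ℝ}

lemma poissonIntegral_mul_bpt (hk : Integrable k arcM) {r : ℝ} (hr : r ∈ Ico (0 : ℝ) 1) {δ : ℝ}
    (hδ : 0 < δ) : IsMajorant (fun θ ↦ poissonIntegral k (r * bpt θ)) (fun _ ↦ δ)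
      (3 * ((∫ θ, ‖k θ‖ ∂arcM) * (1 - r)⁻¹)) := by
  have hB : 0 ≤ (∫ θ, ‖k θ‖ ∂arcM) * (1 - r)⁻¹ :=
    mul_nonneg (integral_nonneg fun θ ↦ norm_nonneg _) (inv_nonneg.2 (sub_nonneg.2 hr.2.le))
  refine ⟨differentiableOn_const _, fun w _ ↦ hδ, fun w hw ↦ ?_, fun w hw ↦ ?_⟩
  · have hrw : ‖(r : ℂ) * w‖ ≤ r := by
      rw [norm_mul, Complex.norm_of_nonneg hr.1]
      exact mul_le_of_le_one_right hr.1 (mem_uDisc.1 hw).le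
    simp_rw [← poissonIntegral_conj]
    rw [cauchyTransform_poissonIntegral (integrable_conj hk) hr hw]
    refine (_root_.norm_cauchyTransform_le (integrable_conj hk)
      (mem_uDisc.2 (hrw.trans_lt hr.2))).trans ?_
    simp only [RCLike.norm_conj]
    calc (∫ θ, ‖k θ‖ ∂arcM) * (1 - ‖(r : ℂ) * w‖)⁻¹
        ≤ (∫ θ, ‖k θ‖ ∂arcM) * (1 - r)⁻¹ := by
          gcongr
          exact sub_pos.2 hr.2
      _ ≤ _ := by linarith [norm_nonneg (δ : ℂ)]
  · refine (norm_poissonIntegral_le_of_forall_le (ae_of_all _ fun θ ↦ ?_) hw).trans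
      (le_add_of_nonneg_right hδ.le)
    simpa only [norm_mul_bpt hr.1] using
      norm_poissonIntegral_le_of_integrable hk (mul_bpt_mem_uDisc hr θ)

lemma ofReal {a : ℝ → ℝ} (ha : Integrable a arcM) (ha0 : ∀ θ, 0 ≤ a θ) {δ : ℝ} (hδ : 0 < δ) :
    IsMajorant (fun θ ↦ a θ)
      (fun w ↦ 2 * cauchyTransform (fun θ ↦ a θ) w - (∫ θ, a θ ∂arcM : ℝ) + δ)
      ((∫ θ, a θ ∂arcM) + δ) := by
  have ha' : Integrable (fun θ ↦ (a θ : ℂ)) arcM := ha.ofReal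
  have hI : 0 ≤ ∫ θ, a θ ∂arcM := integral_nonneg ha0
  have poisson_eq {w : ℂ} (hw : w ∈ uDisc) : ∫ θ, a θ * poissonKernel 0 w (bpt θ) ∂arcM
      = 2 * (cauchyTransform (fun θ ↦ a θ) w).re - ∫ θ, a θ ∂arcM := by
    have h := congrArg re (poissonIntegral_eq ha' hw)
    simpa only [poissonIntegral_ofReal, conj_ofReal, integral_complex_ofReal, add_conj, sub_re,
      ofReal_re] using h
  have poisson_nonneg {w : ℂ} (hw : w ∈ uDisc) :
      0 ≤ ∫ θ, a θ * poissonKernel 0 w (bpt θ) ∂arcM :=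
    integral_nonneg fun θ ↦ mul_nonneg (ha0 θ) (poissonKernel_bpt_nonneg hw θ)
  have re_eq {w : ℂ} (hw : w ∈ uDisc) :
      (2 * cauchyTransform (fun θ ↦ a θ) w - (∫ θ, a θ ∂arcM : ℝ) + δ).re
        = (∫ θ, a θ * poissonKernel 0 w (bpt θ) ∂arcM) + δ := by
    simp [poisson_eq hw]
  refine ⟨(((analyticOnDisc_cauchyTransform ha').const_mul 2).sub_const _).add_const _,
    fun w hw ↦ ?_, fun w _ ↦ ?_, fun w hw ↦ ?_⟩
  · exact re_eq hw ▸ add_pos_of_nonneg_of_pos (poisson_nonneg hw) hδ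
  · simp only [conj_ofReal]
    set V := 2 * cauchyTransform (fun θ ↦ a θ) w - (∫ θ, a θ ∂arcM : ℝ) + δ with hV
    have two_mul_eq : 2 * cauchyTransform (fun θ ↦ a θ) w
        = V + ((∫ θ, a θ ∂arcM : ℝ) - δ : ℂ) := by rw [hV]; ring
    have norm_le : ‖((∫ θ, a θ ∂arcM : ℝ) - δ : ℂ)‖ ≤ (∫ θ, a θ ∂arcM) + δ := by
      simpa [abs_of_nonneg hI, abs_of_pos hδ] using
        norm_sub_le ((∫ θ, a θ ∂arcM : ℝ) : ℂ) (δ : ℂ)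
    have h := two_mul_eq ▸ norm_add_le V ((∫ θ, a θ ∂arcM : ℝ) - δ : ℂ)
    rw [norm_mul, norm_ofNat] at h
    linarith [norm_nonneg V]
  · rw [poissonIntegral_ofReal, Complex.norm_of_nonneg (poisson_nonneg hw), re_eq hw]
    linarith

lemma mono {D' : ℝ} (h : IsMajorant k V D) (hD : D ≤ D') : IsMajorant k V D' :=
  ⟨h.1, h.2, fun w hw ↦ (h.3 w hw).trans (by linarith), fun w hw ↦ (h.4 w hw).trans (by linarith)⟩

lemma const_mul (h : IsMajorant k V D) {c : ℂ} (hc : ‖c‖ = 1) :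
    IsMajorant (fun θ ↦ c * k θ) V D := by
  refine ⟨h.1, h.2, fun w hw ↦ ?_, fun w hw ↦ ?_⟩
  · simpa only [map_mul, cauchyTransform_const_mul, norm_mul, RCLike.norm_conj, hc, one_mul]
      using h.3 w hw
  · simpa only [poissonIntegral_const_mul, norm_mul, hc, one_mul] using h.4 w hw

lemma add (h₁ : IsMajorant k₁ V₁ D₁) (h₂ : IsMajorant k₂ V₂ D₂) (hk₁ : Integrable k₁ arcM)
    (hk₂ : Integrable k₂ arcM) :
    IsMajorant (fun θ ↦ k₁ θ + k₂ θ) (fun w ↦ ((V₁ w).sqrt + (V₂ w).sqrt) ^ 2) (D₁ + D₂) := by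
  have re_le (w : ℂ) (hw : w ∈ uDisc) :=
    re_add_re_le_re_sqrt_add_sqrt_sq (h₁.re_pos w hw).le (h₂.re_pos w hw).le
  have analyticOnDisc_sqrt {V : ℂ → ℂ} (hV : AnalyticOnDisc V) (hpos : ∀ w ∈ uDisc, 0 < (V w).re) :
      AnalyticOnDisc fun w ↦ (V w).sqrt :=
    differentiableOn_sqrt.comp hV fun w hw ↦ Or.inl (hpos w hw)
  refine ⟨((analyticOnDisc_sqrt h₁.1 h₁.2).add (analyticOnDisc_sqrt h₂.1 h₂.2)).pow 2,
    fun w hw ↦ (add_pos (h₁.2 w hw) (h₂.2 w hw)).trans_le (re_le w hw), fun w hw ↦ ?_,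
    fun w hw ↦ ?_⟩
  · simp only [map_add]
    rw [cauchyTransform_add (integrable_conj hk₁) (integrable_conj hk₂) hw]
    linarith [norm_add_le (cauchyTransform (fun θ ↦ conj (k₁ θ)) w)
      (cauchyTransform (fun θ ↦ conj (k₂ θ)) w), h₁.3 w hw, h₂.3 w hw,
      norm_add_norm_le_norm_sqrt_add_sqrt_sq (h₁.re_pos w hw).le (h₂.re_pos w hw).le]
  · rw [poissonIntegral_add hk₁ hk₂ hw]
    linarith [norm_add_le (poissonIntegral k₁ w) (poissonIntegral k₂ w), h₁.4 w hw, h₂.4 w hw,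
      re_le w hw]

end IsMajorant

lemma exists_isMajorant_ofReal {a : ℝ → ℝ} (ha : Integrable a arcM) (ha0 : ∀ θ, 0 ≤ a θ) {η : ℝ}
    (hη : ∫ θ, a θ ∂arcM < η) : ∃ V D, IsMajorant (fun θ ↦ a θ) V D ∧ ‖V 0‖ ≤ η := by
  refine ⟨_, _, .ofReal ha ha0 (sub_pos.2 hη), ?_⟩
  have hη0 : 0 ≤ η := (integral_nonneg ha0).trans hη.le
  rw [cauchyTransform_zero, integral_complex_ofReal]
  refine le_of_eq ?_
  calc ‖(2 * (∫ θ, a θ ∂arcM : ℝ) - (∫ θ, a θ ∂arcM : ℝ) + (η - ∫ θ, a θ ∂arcM : ℝ) : ℂ)‖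
      = ‖(η : ℂ)‖ := by congr 1; push_cast; ring
    _ = η := Complex.norm_of_nonneg hη0

lemma exists_isMajorant_add {k₁ k₂ : ℝ → ℂ} (hk₁ : Integrable k₁ arcM) (hk₂ : Integrable k₂ arcM)
    {η : ℝ} (h₁ : ∃ V D, IsMajorant k₁ V D ∧ ‖V 0‖ ≤ η)
    (h₂ : ∃ V D, IsMajorant k₂ V D ∧ ‖V 0‖ ≤ η) :
    ∃ V D, IsMajorant (fun θ ↦ k₁ θ + k₂ θ) V D ∧ ‖V 0‖ ≤ 4 * η := by
  obtain ⟨V₁, D₁, h₁, hV₁⟩ := h₁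
  obtain ⟨V₂, D₂, h₂, hV₂⟩ := h₂
  refine ⟨_, _, h₁.add h₂ hk₁ hk₂, (norm_sqrt_add_sqrt_sq_le _ _).trans ?_⟩
  linarith

lemma exists_isMajorant_ofReal_of_abs_le {a b : ℝ → ℝ} (ha : Integrable a arcM)
    (hb : Integrable b arcM) (hab : ∀ θ, |a θ| ≤ b θ) {η : ℝ} (hη : ∫ θ, b θ ∂arcM < η) :
    ∃ V D, IsMajorant (fun θ ↦ a θ) V D ∧ ‖V 0‖ ≤ 4 * η := by
  have pos_lt : ∫ θ, max (a θ) 0 ∂arcM < η :=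
    (integral_mono ha.pos_part hb fun θ ↦
      max_le ((le_abs_self _).trans (hab θ)) ((abs_nonneg _).trans (hab θ))).trans_lt hη
  have neg_lt : ∫ θ, max (-a θ) 0 ∂arcM < η :=
    (integral_mono ha.neg_part hb fun θ ↦
      max_le ((neg_le_abs _).trans (hab θ)) ((abs_nonneg _).trans (hab θ))).trans_lt hη
  obtain ⟨V, D, h, hV⟩ := exists_isMajorant_ofReal ha.neg_part (fun θ ↦ le_max_right _ _) neg_lt
  have pos_sub_neg : (fun θ ↦ (a θ : ℂ))
      = fun θ ↦ ((max (a θ) 0 : ℝ) : ℂ) + -1 * (max (-a θ) 0 : ℝ) := by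
    funext θ
    rw [neg_one_mul, ← sub_eq_add_neg]
    exact_mod_cast (max_zero_sub_eq_self (a θ)).symm
  rw [pos_sub_neg]
  exact exists_isMajorant_add ha.pos_part.ofReal (ha.neg_part.ofReal.const_mul (-1 : ℂ))
    (exists_isMajorant_ofReal ha.pos_part (fun θ ↦ le_max_right _ _) pos_lt)
    ⟨V, D, h.const_mul (by simp), hV⟩

lemma exists_isMajorant_of_integral_norm_lt {e : ℝ → ℂ} (he : Integrable e arcM) {η : ℝ}
    (hη : ∫ θ, ‖e θ‖ ∂arcM < η) : ∃ V D, IsMajorant e V D ∧ ‖V 0‖ ≤ 16 * η := by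
  obtain ⟨V, D, h, hV⟩ :=
    exists_isMajorant_ofReal_of_abs_le he.im he.norm (fun θ ↦ abs_im_le_norm _) hη
  have re_add_im : e = fun θ ↦ ((e θ).re : ℂ) + I * (e θ).im := by
    funext θ
    rw [mul_comm, Complex.re_add_im]
  rw [re_add_im, show 16 * η = 4 * (4 * η) by ring]
  exact exists_isMajorant_add he.re.ofReal (he.im.ofReal.const_mul I)
    (exists_isMajorant_ofReal_of_abs_le he.re he.norm (fun θ ↦ abs_re_le_norm _) hη)
    ⟨V, D, h.const_mul norm_I, hV⟩

theorem exists_isMajorant {k : ℝ → ℂ} (hk : Integrable k arcM) {ε : ℝ} (hε : 0 < ε) :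
    ∃ V D, IsMajorant k V D ∧ ‖V 0‖ ≤ ε := by
  obtain ⟨r, h_lt, hr⟩ := (((tendsto_integral_norm_poissonIntegral_sub hk).eventually_lt_const
    (show 0 < ε / 64 by positivity)).and (Ico_mem_nhdsLT zero_lt_one)).exists
  have hP := integrable_poissonIntegral_mul_bpt hk hr
  obtain ⟨V, D, h, hV⟩ := exists_isMajorant_of_integral_norm_lt (hP.sub hk) h_lt
  have eq_add : k = fun θ ↦ poissonIntegral k (r * bpt θ)
      + -1 * (poissonIntegral k (r * bpt θ) - k θ) := by
    funext θ
    ring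
  have hε4 : 0 < ε / 4 := by positivity
  rw [show ε = 4 * (ε / 4) by ring, eq_add]
  exact exists_isMajorant_add hP ((hP.sub hk).const_mul (-1))
    ⟨_, _, .poissonIntegral_mul_bpt hk hr hε4, (Complex.norm_of_nonneg hε4.le).le⟩
    ⟨V, D, h.const_mul (by simp), hV.trans (by linarith)⟩

section Quotient

variable {A : ℝ} {v : ℂ}

lemma ofReal_add_ne_zero (hA : 0 < A) (hv : 0 ≤ v.re) : (A + v : ℂ) ≠ 0 := fun h ↦ by
  simpa using (add_pos_of_pos_of_nonneg hA hv).ne' (by simpa using congrArg re h)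

lemma norm_ofReal_div_add_le_one (hA : 0 < A) (hv : 0 ≤ v.re) : ‖(A / (A + v) : ℂ)‖ ≤ 1 := by
  rw [norm_div, Complex.norm_of_nonneg hA.le]
  refine div_le_one_of_le₀ (le_trans ?_ (re_le_norm _)) (norm_nonneg _)
  simpa using hv

lemma sq_norm_div_ofReal_add_le_re (hA : 0 < A) (hv : 0 ≤ v.re) :
    ‖(v / (A + v) : ℂ)‖ ^ 2 ≤ (v / (A + v)).re := by
  rw [Complex.sq_norm, map_div₀, div_re, ← add_div]
  gcongr
  · exact normSq_nonneg _
  · simp only [normSq_apply, add_re, ofReal_re, add_im, ofReal_im, zero_add]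
    nlinarith

lemma norm_div_ofReal_add_le_one (hA : 0 < A) (hv : 0 ≤ v.re) : ‖(v / (A + v) : ℂ)‖ ≤ 1 := by
  have h := (sq_norm_div_ofReal_add_le_re hA hv).trans (re_le_norm _)
  nlinarith [norm_nonneg (v / (A + v) : ℂ)]

lemma norm_sub_conj_ofReal_div_add_le (hA : 0 < A) :
    ‖(A / (A + v) - conj (A / (A + v)) : ℂ)‖ ≤ 2 * (‖(A / (A + v) : ℂ)‖ * ‖(v / (A + v) : ℂ)‖) := by
  have abs_im_le : |(A / (A + v) : ℂ).im| ≤ ‖(A / (A + v) : ℂ)‖ * ‖(v / (A + v) : ℂ)‖ := by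
    rw [div_im, norm_div, norm_div, div_mul_div_comm, Complex.norm_mul_self_eq_normSq,
      Complex.norm_of_nonneg hA.le]
    simp only [ofReal_im, zero_mul, zero_div, zero_sub, abs_neg, abs_div, abs_mul, add_im,
      zero_add, ofReal_re, abs_of_pos hA, abs_of_nonneg (normSq_nonneg _)]
    gcongr
    · exact normSq_nonneg _
    · exact abs_im_le_norm v
  rw [sub_conj, norm_mul, norm_I, mul_one, Complex.norm_real, Real.norm_eq_abs, abs_mul, abs_two]
  linarith

end Quotient

namespace IsMajorant

variable {k : ℝ → ℂ} {V : ℂ → ℂ} {A D η : ℝ} {w : ℂ}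

lemma norm_multiplier_mul_cauchyTransform_le (h : IsMajorant k V D) (hD : 0 ≤ D) (hA : 0 < A)
    (hw : w ∈ uDisc) :
    ‖A / (A + V w) * cauchyTransform (fun θ ↦ conj (k θ)) w‖ ≤ D + A * ‖V w / (A + V w)‖ := by
  have hv := (h.re_pos w hw).le
  have mul_norm_eq : ‖A / (A + V w)‖ * ‖V w‖ = A * ‖V w / (A + V w)‖ := by
    rw [norm_div, norm_div, Complex.norm_of_nonneg hA.le]
    ring
  calc ‖A / (A + V w) * cauchyTransform (fun θ ↦ conj (k θ)) w‖
      ≤ ‖A / (A + V w)‖ * (D + ‖V w‖) := by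
        rw [norm_mul]
        gcongr
        exact h.norm_cauchyTransform_le w hw
    _ = ‖A / (A + V w)‖ * D + A * ‖V w / (A + V w)‖ := by rw [mul_add, mul_norm_eq]
    _ ≤ D + A * ‖V w / (A + V w)‖ := by
        gcongr
        exact mul_le_of_le_one_left hD (norm_ofReal_div_add_le_one hA hv)

lemma norm_poissonIntegral_sub_le (h : IsMajorant k V D) (hk : Integrable k arcM) (hD : 0 ≤ D)
    (hA : 0 < A) (hη : 0 < η) (hAD : D ^ 2 ≤ A * η) (hw : w ∈ uDisc) :
    ‖poissonIntegral k w - A / (A + V w) * (cauchyTransform k w - ∫ θ, k θ ∂arcM)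
        - conj (A / (A + V w) * cauchyTransform (fun θ ↦ conj (k θ)) w)‖
      ≤ (3 * η + 3 * A * (V w / (A + V w)) + V w : ℂ).re := by
  have hv := (h.re_pos w hw).le
  have hne := ofReal_add_ne_zero hA hv
  set φ : ℂ := A / (A + V w) with hφ
  set s : ℂ := V w / (A + V w) with hs
  set c := cauchyTransform (fun θ ↦ conj (k θ)) w
  have hφs : 1 - φ = s := by rw [hφ, hs]; field_simp; ring
  have expand : poissonIntegral k w - φ * (cauchyTransform k w - ∫ θ, k θ ∂arcM) - conj (φ * c)
      = s * poissonIntegral k w + (φ - conj φ) * conj c := by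
    rw [← hφs, poissonIntegral_eq hk hw, map_mul]
    ring
  have norm_first_le : ‖s * poissonIntegral k w‖ ≤ D * ‖s‖ + (V w).re := by
    rw [norm_mul]
    nlinarith [h.norm_poissonIntegral_le w hw, norm_nonneg s, norm_div_ofReal_add_le_one hA hv]
  have norm_second_le : ‖(φ - conj φ) * conj c‖ ≤ 2 * (D * ‖s‖ + A * ‖s‖ ^ 2) := by
    have h_mul := h.norm_multiplier_mul_cauchyTransform_le hD hA hw
    rw [norm_mul] at h_mul
    rw [norm_mul, RCLike.norm_conj]
    nlinarith [norm_sub_conj_ofReal_div_add_le (v := V w) hA, norm_nonneg s, norm_nonneg c]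
  have am_gm : D * ‖s‖ ≤ η + A * ‖s‖ ^ 2 / 4 := by
    have := mul_le_mul_of_nonneg_right hAD (sq_nonneg ‖s‖)
    nlinarith [sq_nonneg (D * ‖s‖ - 2 * η)]
  have h_re : A * ‖s‖ ^ 2 ≤ A * s.re :=
    mul_le_mul_of_nonneg_left (sq_norm_div_ofReal_add_le_re hA hv) hA.le
  have re_eq : (3 * η + 3 * A * s + V w : ℂ).re = 3 * η + 3 * (A * s.re) + (V w).re := by
    simp [mul_assoc]
  rw [expand, re_eq]
  linarith [norm_add_le (s * poissonIntegral k w) ((φ - conj φ) * conj c),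
    mul_nonneg hA.le (sq_nonneg ‖s‖)]

end IsMajorant

theorem exists_multiplier {k : ℝ → ℂ} (hk : Integrable k arcM) {ε : ℝ} (hε : 0 < ε) :
    ∃ φ U : ℂ → ℂ, MemHinf φ ∧ MemHinf (fun w ↦ φ w * cauchyTransform (fun θ ↦ conj (k θ)) w) ∧
      AnalyticOnDisc U ∧ (U 0).re ≤ ε ∧ ∀ w ∈ uDisc,
        ‖poissonIntegral k w - φ w * (cauchyTransform k w - ∫ θ, k θ ∂arcM)
          - conj (φ w * cauchyTransform (fun θ ↦ conj (k θ)) w)‖ ≤ (U w).re := by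
  set η := ε / 7 with hη
  have hη0 : 0 < η := by positivity
  obtain ⟨V, D₀, h₀, hV0⟩ := exists_isMajorant hk hη0
  set D := |D₀|
  have h : IsMajorant k V D := h₀.mono (le_abs_self D₀)
  have hD : 0 ≤ D := abs_nonneg D₀
  set A := D ^ 2 / η + 1
  have hA : 0 < A := by positivity
  have hAD : D ^ 2 ≤ A * η := by
    rw [add_mul, div_mul_cancel₀ _ hη0.ne']
    linarith
  have hden (w : ℂ) (hw : w ∈ uDisc) := ofReal_add_ne_zero hA (h.re_pos w hw).le
  have hV := h.analyticOnDisc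
  have hφ : AnalyticOnDisc fun w ↦ A / (A + V w) :=
    (differentiableOn_const _).div (hV.const_add _) hden
  refine ⟨fun w ↦ A / (A + V w), fun w ↦ 3 * η + 3 * A * (V w / (A + V w)) + V w,
    ⟨hφ, 1, fun w hw ↦ norm_ofReal_div_add_le_one hA (h.re_pos w hw).le⟩,
    ⟨hφ.mul (analyticOnDisc_cauchyTransform (integrable_conj hk)), D + A, fun w hw ↦ ?_⟩,
    (((hV.div (hV.const_add _) hden).const_mul _).const_add _).add hV, ?_,
    fun w hw ↦ h.norm_poissonIntegral_sub_le hk hD hA hη0 hAD hw⟩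
  · refine (h.norm_multiplier_mul_cauchyTransform_le hD hA hw).trans ?_
    gcongr
    exact mul_le_of_le_one_right hA.le (norm_div_ofReal_add_le_one hA (h.re_pos w hw).le)
  · have hv := (h.re_pos 0 zero_mem_uDisc).le
    have norm_le : ‖A * (V 0 / (A + V 0))‖ ≤ ‖V 0‖ := by
      rw [mul_div_left_comm, norm_mul]
      exact mul_le_of_le_one_right (norm_nonneg _) (norm_ofReal_div_add_le_one hA hv)
    have re_eq : (3 * η + 3 * A * (V 0 / (A + V 0)) + V 0 : ℂ).re
        = 3 * η + 3 * (A * (V 0 / (A + V 0))).re + (V 0).re := by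
      simp [mul_assoc]
    rw [re_eq]
    linarith [re_le_norm (V 0), re_le_norm (A * (V 0 / (A + V 0)))]

/-! ### Annihilators of invariant subspaces -/

/-- `k ∈ L¹` annihilates the boundary functions of `M` under the pairing `∫ F k` of `L^∞` and
`L¹`. -/
structure IsAnnihilator (M : Set (ℂ → ℂ)) (k : ℝ → ℂ) : Prop where
  integrable : Integrable k arcM
  integral_mul_eq_zero : ∀ g ∈ M, ∀ G, BoundaryFn g G → ∫ θ, G θ * k θ ∂arcM = 0

lemma mul_bShift (f : ℂ → ℂ) (z : ℂ) : z * bShift f z = f z - f 0 := by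
  by_cases hz : z = 0
  · simp [hz]
  · simp [bShift, hz, mul_div_cancel₀]

lemma BoundaryFn.bShift {f : ℂ → ℂ} {F : ℝ → ℂ} (hF : BoundaryFn f F) :
    BoundaryFn (bShift f) fun θ ↦ (F θ - f 0) * (bpt θ)⁻¹ := by
  have h_inv : BoundaryFn (fun z ↦ z⁻¹) fun θ ↦ (bpt θ)⁻¹ :=
    .of_continuousOn_compl_zero continuousOn_inv₀
  filter_upwards [hF, h_inv] with θ hf hθ
  refine ((hf.sub_const (f 0)).mul hθ).congr' ?_
  filter_upwards [Ioo_mem_nhdsLT zero_lt_one] with r hr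
  have hr0 : (r : ℂ) * bpt θ ≠ 0 := mul_ne_zero (ofReal_ne_zero.2 hr.1.ne') (bpt_ne_zero θ)
  rw [← mul_bShift, mul_comm, inv_mul_cancel_left₀ hr0]

lemma cauchyTransform_eq_integral_add {u : ℝ → ℂ} (hu : Integrable u arcM) {w : ℂ}
    (hw : w ∈ uDisc) :
    cauchyTransform u w
      = (∫ θ, u θ ∂arcM) + w * cauchyTransform (fun θ ↦ u θ * (bpt θ)⁻¹) w := by
  have hu' : Integrable (fun θ ↦ u θ * (bpt θ)⁻¹) arcM := by
    simpa using integrable_mul_bpt_zpow hu (-1)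
  rw [cauchyTransform, cauchyTransform, ← integral_const_mul,
    ← integral_add hu ((integrable_mul_cauchyKernel hu' hw).const_mul w)]
  congr 1 with θ
  have h : (1 - w * (bpt θ)⁻¹) * cauchyKernel w θ = 1 :=
    mul_inv_cancel₀ (one_sub_mul_inv_bpt_ne_zero hw θ)
  linear_combination u θ * h

lemma eqOn_zero_of_forall_exists_eq_mul {S : Set (ℂ → ℂ)} (hS : ∀ e ∈ S, AnalyticOnDisc e)
    (hdiv : ∀ e ∈ S, ∃ e' ∈ S, ∀ z ∈ uDisc, e z = z * e' z) {e : ℂ → ℂ} (he : e ∈ S) :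
    EqOn e 0 uDisc := by
  have analyticOnNhd {e : ℂ → ℂ} (he : e ∈ S) : AnalyticOnNhd ℂ e uDisc :=
    (hS e he).analyticOnNhd isOpen_ball
  have exists_eq_pow_mul (n : ℕ) : ∀ e ∈ S, ∃ e' ∈ S, ∀ z ∈ uDisc, e z = z ^ n * e' z := by
    induction n with
    | zero => exact fun e he ↦ ⟨e, he, fun z _ ↦ by simp⟩
    | succ n ih =>
      intro e he
      obtain ⟨e₁, he₁, h₁⟩ := ih e he
      obtain ⟨e₂, he₂, h₂⟩ := hdiv e₁ he₁
      exact ⟨e₂, he₂, fun z hz ↦ by rw [h₁ z hz, h₂ z hz, pow_succ, mul_assoc]⟩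
  have order_ge (n : ℕ) : n ≤ analyticOrderAt e 0 := by
    obtain ⟨e', he', h⟩ := exists_eq_pow_mul n e he
    refine (natCast_le_analyticOrderAt (analyticOnNhd he 0 zero_mem_uDisc)).2
      ⟨e', analyticOnNhd he' 0 zero_mem_uDisc, ?_⟩
    filter_upwards [isOpen_ball.mem_nhds zero_mem_uDisc] with z hz
    simpa using h z hz
  have order_top : analyticOrderAt e 0 = ⊤ := ENat.eq_top_iff_forall_ge.2 order_ge
  exact (analyticOnNhd he).eqOn_zero_of_preconnected_of_eventuallyEq_zero
    (convex_ball 0 1).isPreconnected zero_mem_uDisc (analyticOrderAt_eq_top.1 order_top)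

section Annihilator

variable {M : Set (ℂ → ℂ)} {k : ℝ → ℂ} {g : ℂ → ℂ} {G : ℝ → ℂ} {w : ℂ}

lemma IsAnnihilator.cauchyTransform_mul_sub_eq (hk : IsAnnihilator M k) (hg : g ∈ M)
    (hgH : MemHinf g) (hgH' : MemHinf (bShift g)) (hG : BoundaryFn g G) (hw : w ∈ uDisc) :
    cauchyTransform (fun θ ↦ G θ * k θ) w - g w * (cauchyTransform k w - ∫ θ, k θ ∂arcM)
      = w * (cauchyTransform (fun θ ↦ (G θ - g 0) * (bpt θ)⁻¹ * k θ) w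
        - bShift g w * (cauchyTransform k w - ∫ θ, k θ ∂arcM)) := by
  have hGk := hgH.integrable_boundaryFn_mul hG hk.integrable
  have hk' : Integrable (fun θ ↦ k θ * (bpt θ)⁻¹) arcM := by
    simpa using integrable_mul_bpt_zpow hk.integrable (-1)
  have split : cauchyTransform (fun θ ↦ G θ * k θ * (bpt θ)⁻¹) w
      = cauchyTransform (fun θ ↦ (G θ - g 0) * (bpt θ)⁻¹ * k θ) w
        + g 0 * cauchyTransform (fun θ ↦ k θ * (bpt θ)⁻¹) w := by
    rw [← cauchyTransform_const_mul, ← cauchyTransform_add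
      (hgH'.integrable_boundaryFn_mul hG.bShift hk.integrable) (hk'.const_mul _) hw]
    congr 1 with θ
    ring
  rw [cauchyTransform_eq_integral_add hGk hw, hk.integral_mul_eq_zero g hg G hG, split,
    cauchyTransform_eq_integral_add hk.integrable hw]
  linear_combination
    (-w * cauchyTransform (fun θ ↦ k θ * (bpt θ)⁻¹) w) * (sub_eq_iff_eq_add.1 (mul_bShift g w).symm)

theorem IsAnnihilator.cauchyTransform_mul (hk : IsAnnihilator M k) (hM : ∀ g ∈ M, MemHinf g)
    (hinv : ∀ g ∈ M, bShift g ∈ M) (hg : g ∈ M) (hG : BoundaryFn g G) (hw : w ∈ uDisc) :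
    cauchyTransform (fun θ ↦ G θ * k θ) w = g w * (cauchyTransform k w - ∫ θ, k θ ∂arcM) := by
  set S : Set (ℂ → ℂ) := {e | ∃ g ∈ M, ∃ G, BoundaryFn g G ∧ e = fun w ↦
    cauchyTransform (fun θ ↦ G θ * k θ) w - g w * (cauchyTransform k w - ∫ θ, k θ ∂arcM)}
  have hS : ∀ e ∈ S, AnalyticOnDisc e := by
    rintro _ ⟨g, hg, G, hG, rfl⟩
    exact (analyticOnDisc_cauchyTransform
      ((hM g hg).integrable_boundaryFn_mul hG hk.integrable)).sub
      ((hM g hg).1.mul ((analyticOnDisc_cauchyTransform hk.integrable).sub_const _))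
  have hdiv : ∀ e ∈ S, ∃ e' ∈ S, ∀ z ∈ uDisc, e z = z * e' z := by
    rintro _ ⟨g, hg, G, hG, rfl⟩
    exact ⟨_, ⟨_, hinv g hg, _, hG.bShift, rfl⟩, fun z hz ↦
      hk.cauchyTransform_mul_sub_eq hg (hM g hg) (hM _ (hinv g hg)) hG hz⟩
  exact sub_eq_zero.1 (eqOn_zero_of_forall_exists_eq_mul hS hdiv ⟨g, hg, G, hG, rfl⟩ hw)

end Annihilator

section Multiplier

variable {M : Set (ℂ → ℂ)} {k F G P : ℝ → ℂ} {f g p φ U : ℂ → ℂ} {C r : ℝ}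

lemma continuous_poissonIntegral_mul_bpt (hk : Integrable k arcM) (hr : r ∈ Ico (0 : ℝ) 1) :
    Continuous fun θ ↦ poissonIntegral k (r * bpt θ) :=
  continuous_comp_mul_bpt (continuousOn_poissonIntegral hk) hr

lemma MemHinf.exists_norm_mul_conj_le (hf : MemHinf f) (hp : MemHinf p) :
    ∃ C, ∀ z ∈ uDisc, ‖f z * conj (p z)‖ ≤ C := by
  simpa only [norm_mul, RCLike.norm_conj] using (hf.mul hp).2

lemma MemHinf.continuousOn_mul_conj (hf : MemHinf f) (hp : MemHinf p) :
    ContinuousOn (fun z ↦ f z * conj (p z)) uDisc :=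
  hf.1.continuousOn.mul (continuous_conj.comp_continuousOn hp.1.continuousOn)

lemma MemHinf.tendsto_integral_mul_conj (hf : MemHinf f) (hF : BoundaryFn f F) (hp : MemHinf p)
    (hP : BoundaryFn p P) :
    Tendsto (fun r : ℝ ↦ ∫ θ, f (r * bpt θ) * conj (p (r * bpt θ)) ∂arcM) (𝓝[<] 1)
      (𝓝 (∫ θ, F θ * conj (P θ) ∂arcM)) := by
  obtain ⟨C, hC⟩ := hf.exists_norm_mul_conj_le hp
  exact (hF.mul hP.conj_comp).tendsto_integral (hf.continuousOn_mul_conj hp) hC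

lemma norm_integral_mul_bpt_sub_le (hk : Integrable k arcM) (hf : AnalyticOnDisc f)
    (hC : ∀ z ∈ uDisc, ‖f z‖ ≤ C) (hφ : AnalyticOnDisc φ) (hp : AnalyticOnDisc p)
    (hU : AnalyticOnDisc U)
    (hle : ∀ w ∈ uDisc, ‖poissonIntegral k w - φ w * (cauchyTransform k w - ∫ θ, k θ ∂arcM)
      - conj (p w)‖ ≤ (U w).re) (hr : r ∈ Ico (0 : ℝ) 1) :
    ‖(∫ θ, f (r * bpt θ) * poissonIntegral k (r * bpt θ) ∂arcM)
      - ∫ θ, f (r * bpt θ) * conj (p (r * bpt θ)) ∂arcM‖ ≤ C * (U 0).re := by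
  set q : ℂ → ℂ := fun w ↦ cauchyTransform k w - ∫ θ, k θ ∂arcM
  have hq : AnalyticOnDisc q := (analyticOnDisc_cauchyTransform hk).sub_const _
  have continuous_comp {h : ℂ → ℂ} (hh : AnalyticOnDisc h) : Continuous fun θ ↦ h (r * bpt θ) :=
    continuous_comp_mul_bpt hh.continuousOn hr
  have hi₁ := integrable_arcM_of_continuous
    ((continuous_comp hf).mul (continuous_poissonIntegral_mul_bpt hk hr))
  have hi₂ := integrable_arcM_of_continuous
    ((continuous_comp hf).mul ((continuous_comp hφ).mul (continuous_comp hq)))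
  have hi₃ := integrable_arcM_of_continuous
    ((continuous_comp hf).mul (continuous_conj.comp (continuous_comp hp)))
  have integral_eq_zero : ∫ θ, f (r * bpt θ) * (φ (r * bpt θ) * q (r * bpt θ)) ∂arcM = 0 := by
    have h := AnalyticOnDisc.integral_mul_bpt (hf.mul (hφ.mul hq)) hr
    simpa [q, cauchyTransform_zero] using h
  have integral_re : ∫ θ, (U (r * bpt θ)).re ∂arcM = (U 0).re := by
    rw [← hU.integral_mul_bpt hr]
    exact integral_re (integrable_arcM_of_continuous (continuous_comp hU))
  calc _ = ‖∫ θ, f (r * bpt θ) * (poissonIntegral k (r * bpt θ)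
          - φ (r * bpt θ) * q (r * bpt θ) - conj (p (r * bpt θ))) ∂arcM‖ := by
        simp only [mul_sub]
        rw [integral_sub, integral_sub, integral_eq_zero, sub_zero]
        exacts [hi₁, hi₂, hi₁.sub hi₂, hi₃]
    _ ≤ ∫ θ, C * (U (r * bpt θ)).re ∂arcM := by
        refine norm_integral_le_of_norm_le (integrable_arcM_of_continuous
          (continuous_const.mul (continuous_re.comp (continuous_comp hU)))) (ae_of_all _ fun θ ↦ ?_)
        have hz := mul_bpt_mem_uDisc hr θ
        rw [norm_mul]
        exact mul_le_mul (hC _ hz) (hle _ hz) (norm_nonneg _) ((norm_nonneg _).trans (hC _ hz))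
    _ = C * (U 0).re := by rw [integral_const_mul, integral_re]

lemma norm_integral_mul_sub_le (hk : Integrable k arcM) (hf : AnalyticOnDisc f)
    (hC : ∀ z ∈ uDisc, ‖f z‖ ≤ C) (hF : BoundaryFn f F) (hφ : AnalyticOnDisc φ) (hp : MemHinf p)
    (hP : BoundaryFn p P) (hU : AnalyticOnDisc U)
    (hle : ∀ w ∈ uDisc, ‖poissonIntegral k w - φ w * (cauchyTransform k w - ∫ θ, k θ ∂arcM)
      - conj (p w)‖ ≤ (U w).re) :
    ‖(∫ θ, F θ * k θ ∂arcM) - ∫ θ, F θ * conj (P θ) ∂arcM‖ ≤ C * (U 0).re := by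
  have hlim := hF.tendsto_integral_mul_poissonIntegral hf.continuousOn hC hk
  have hlim' := MemHinf.tendsto_integral_mul_conj ⟨hf, C, hC⟩ hF hp hP
  refine le_of_tendsto (hlim.sub hlim').norm ?_
  filter_upwards [Ico_mem_nhdsLT zero_lt_one] with r hr
    using norm_integral_mul_bpt_sub_le hk hf hC hφ hp.1 hU hle hr

lemma IsAnnihilator.mul_conj_multiplier_eq (hk : IsAnnihilator M k) (hM : ∀ g ∈ M, MemHinf g)
    (hinv : ∀ g ∈ M, bShift g ∈ M) (hg : g ∈ M) (hG : BoundaryFn g G) (φ : ℂ → ℂ) {w : ℂ}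
    (hw : w ∈ uDisc) :
    g w * conj (φ w * cauchyTransform (fun θ ↦ conj (k θ)) w)
      = g w * conj (φ w) * poissonIntegral k w
        - conj (φ w) * poissonIntegral (fun θ ↦ G θ * k θ) w
        + conj (φ w * cauchyTransform (fun θ ↦ conj (G θ * k θ)) w) := by
  have hGk := (hM g hg).integrable_boundaryFn_mul hG hk.integrable
  rw [poissonIntegral_eq hk.integrable hw, poissonIntegral_eq hGk hw,
    hk.cauchyTransform_mul hM hinv hg hG hw, hk.integral_mul_eq_zero g hg G hG, map_mul, map_mul]
  ring

lemma IsAnnihilator.integral_mul_bpt_mul_conj_multiplier (hk : IsAnnihilator M k)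
    (hM : ∀ g ∈ M, MemHinf g) (hinv : ∀ g ∈ M, bShift g ∈ M) (hφ : AnalyticOnDisc φ) (hg : g ∈ M)
    (hG : BoundaryFn g G) (hr : r ∈ Ico (0 : ℝ) 1) :
    ∫ θ, g (r * bpt θ)
        * conj (φ (r * bpt θ) * cauchyTransform (fun θ ↦ conj (k θ)) (r * bpt θ)) ∂arcM
      = (∫ θ, g (r * bpt θ) * conj (φ (r * bpt θ)) * poissonIntegral k (r * bpt θ) ∂arcM)
        - ∫ θ, conj (φ (r * bpt θ)) * poissonIntegral (fun θ ↦ G θ * k θ) (r * bpt θ) ∂arcM := by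
  have hGk := (hM g hg).integrable_boundaryFn_mul hG hk.integrable
  set p : ℂ → ℂ := fun w ↦ φ w * cauchyTransform (fun θ ↦ conj (G θ * k θ)) w
  have hp : AnalyticOnDisc p := hφ.mul (analyticOnDisc_cauchyTransform (integrable_conj hGk))
  have mean_zero : ∫ θ, conj (p (r * bpt θ)) ∂arcM = 0 := by
    rw [integral_conj, hp.integral_mul_bpt hr]
    simp only [p]
    rw [cauchyTransform_zero, integral_conj, hk.integral_mul_eq_zero g hg G hG, map_zero,
      mul_zero, map_zero]
  have hgc := continuous_comp_mul_bpt (hM g hg).1.continuousOn hr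
  have hφc := continuous_conj.comp (continuous_comp_mul_bpt hφ.continuousOn hr)
  have hi₁ := integrable_arcM_of_continuous
    ((hgc.mul hφc).mul (continuous_poissonIntegral_mul_bpt hk.integrable hr))
  have hi₂ := integrable_arcM_of_continuous
    (hφc.mul (continuous_poissonIntegral_mul_bpt hGk hr))
  have hi₃ := integrable_arcM_of_continuous
    (continuous_conj.comp (continuous_comp_mul_bpt hp.continuousOn hr))
  simp only [hk.mul_conj_multiplier_eq hM hinv hg hG φ (mul_bpt_mem_uDisc hr _)]
  rw [integral_add, integral_sub, mean_zero, add_zero]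
  exacts [hi₁, hi₂, hi₁.sub hi₂, hi₃]

theorem IsAnnihilator.integral_mul_conj_multiplier (hk : IsAnnihilator M k)
    (hM : ∀ g ∈ M, MemHinf g) (hinv : ∀ g ∈ M, bShift g ∈ M) (hφ : MemHinf φ)
    (hp : MemHinf fun w ↦ φ w * cauchyTransform (fun θ ↦ conj (k θ)) w)
    (hP : BoundaryFn (fun w ↦ φ w * cauchyTransform (fun θ ↦ conj (k θ)) w) P) (hg : g ∈ M)
    (hG : BoundaryFn g G) : ∫ θ, G θ * conj (P θ) ∂arcM = 0 := by
  have hgH := hM g hg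
  have hGk := hgH.integrable_boundaryFn_mul hG hk.integrable
  obtain ⟨Φ, hΦ⟩ := hφ.exists_boundaryFn
  obtain ⟨B, hB⟩ := hgH.exists_norm_mul_conj_le hφ
  obtain ⟨C, hC⟩ := hφ.2
  have hlim₁ := (hG.mul hΦ.conj_comp).tendsto_integral_mul_poissonIntegral
    (hgH.continuousOn_mul_conj hφ) hB hk.integrable
  have hlim₂ := hΦ.conj_comp.tendsto_integral_mul_poissonIntegral
    (continuous_conj.comp_continuousOn hφ.1.continuousOn)
    (fun z hz ↦ (RCLike.norm_conj (φ z)).trans_le (hC z hz)) hGk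
  have limits_eq : ∫ θ, G θ * conj (Φ θ) * k θ ∂arcM = ∫ θ, conj (Φ θ) * (G θ * k θ) ∂arcM := by
    congr 1 with θ
    ring
  have hlim := hlim₁.sub hlim₂
  rw [limits_eq, sub_self] at hlim
  refine tendsto_nhds_unique (hgH.tendsto_integral_mul_conj hG hp hP) (hlim.congr' ?_)
  filter_upwards [Ico_mem_nhdsLT zero_lt_one] with r hr
    using (hk.integral_mul_bpt_mul_conj_multiplier hM hinv hφ.1 hg hG hr).symm

theorem IsAnnihilator.exists_memHinf (hk : IsAnnihilator M k) (hM : ∀ g ∈ M, MemHinf g)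
    (hinv : ∀ g ∈ M, bShift g ∈ M) (hf : MemHinf f) (hF : BoundaryFn f F)
    (hne : ∫ θ, F θ * k θ ∂arcM ≠ 0) :
    ∃ p P, MemHinf p ∧ BoundaryFn p P ∧
      (∀ g ∈ M, ∀ G, BoundaryFn g G → ∫ θ, G θ * conj (P θ) ∂arcM = 0) ∧
      ∫ θ, F θ * conj (P θ) ∂arcM ≠ 0 := by
  obtain ⟨C, hC⟩ := hf.2
  have hC0 : 0 ≤ C := (norm_nonneg _).trans (hC 0 zero_mem_uDisc)
  set ε := ‖∫ θ, F θ * k θ ∂arcM‖ / (C + 1)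
  have hε : 0 < ε := div_pos (norm_pos_iff.2 hne) (by positivity)
  obtain ⟨φ, U, hφ, hp, hU, hU0, hle⟩ := exists_multiplier hk.integrable hε
  obtain ⟨P, hP⟩ := hp.exists_boundaryFn
  refine ⟨_, P, hp, hP, fun g hg G hG ↦
    hk.integral_mul_conj_multiplier hM hinv hφ hp hP hg hG, fun h0 ↦ ?_⟩
  have h := norm_integral_mul_sub_le hk.integrable hf.1 hC hF hφ.1 hp hP hU hle
  rw [h0, sub_zero] at h
  have : C * ε + ε = ‖∫ θ, F θ * k θ ∂arcM‖ := by
    simp only [ε]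
    field_simp
  linarith [mul_le_mul_of_nonneg_left hU0 hC0]

end Multiplier

/-! ### Separation from weak-star closed subspaces -/

/-- `M` is a linear subspace of `H^∞`. -/
structure IsHinfSubspace (M : Set (ℂ → ℂ)) : Prop where
  memHinf : ∀ f ∈ M, MemHinf f
  zero_mem : (fun _ ↦ 0) ∈ M
  add_mem : ∀ f ∈ M, ∀ g ∈ M, (fun z ↦ f z + g z) ∈ M
  smul_mem : ∀ c : ℂ, ∀ f ∈ M, (fun z ↦ c * f z) ∈ M

namespace IsHinfSubspace

variable {M : Set (ℂ → ℂ)} {ι : Type*} {h : ι → ℝ → ℂ} {f : ℂ → ℂ} {F : ℝ → ℂ}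

/-- The vectors `(∫ G hᵢ)ᵢ` obtained by testing the boundary functions of `M` against the `L¹`
functions `hᵢ`. -/
def testValues (hM : IsHinfSubspace M) (hh : ∀ i, Integrable (h i) arcM) :
    Submodule ℂ (ι → ℂ) where
  carrier := {v | ∃ g ∈ M, ∃ G, BoundaryFn g G ∧ ∀ i, ∫ θ, G θ * h i θ ∂arcM = v i}
  zero_mem' := ⟨_, hM.zero_mem, _, .const 0, fun i ↦ by simp⟩
  add_mem' := by
    rintro v₁ v₂ ⟨g₁, hg₁, G₁, hG₁, h₁⟩ ⟨g₂, hg₂, G₂, hG₂, h₂⟩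
    refine ⟨_, hM.add_mem g₁ hg₁ g₂ hg₂, _, hG₁.add hG₂, fun i ↦ ?_⟩
    simp only [add_mul]
    rw [integral_add ((hM.memHinf g₁ hg₁).integrable_boundaryFn_mul hG₁ (hh i))
      ((hM.memHinf g₂ hg₂).integrable_boundaryFn_mul hG₂ (hh i)), Pi.add_apply, h₁, h₂]
  smul_mem' := by
    rintro c v ⟨g, hg, G, hG, hv⟩
    refine ⟨_, hM.smul_mem c g hg, _, (BoundaryFn.const c).mul hG, fun i ↦ ?_⟩
    simp only [mul_assoc]
    rw [integral_const_mul, Pi.smul_apply, hv, smul_eq_mul]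

lemma exists_isAnnihilator_of_notMem_testValues [Finite ι] (hM : IsHinfSubspace M)
    (hh : ∀ i, Integrable (h i) arcM) (hf : MemHinf f) (hF : BoundaryFn f F)
    (hnot : (fun i ↦ ∫ θ, F θ * h i θ ∂arcM) ∉ hM.testValues hh) :
    ∃ k, IsAnnihilator M k ∧ ∫ θ, F θ * k θ ∂arcM ≠ 0 := by
  classical
  have := Fintype.ofFinite ι
  obtain ⟨l, hl, hker⟩ := Submodule.exists_le_ker_of_notMem hnot
  have integral_eq {g : ℂ → ℂ} {G : ℝ → ℂ} (hg : MemHinf g) (hG : BoundaryFn g G) :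
      ∫ θ, G θ * ∑ i, h i θ * l (Pi.single i 1) ∂arcM = l fun i ↦ ∫ θ, G θ * h i θ ∂arcM := by
    simp only [Finset.mul_sum, ← mul_assoc]
    rw [integral_finsetSum _ fun i _ ↦ (hg.integrable_boundaryFn_mul hG (hh i)).mul_const _,
      l.pi_apply_eq_sum_univ]
    refine Finset.sum_congr rfl fun i _ ↦ ?_
    rw [integral_mul_const, smul_eq_mul]
    congr 2 with j
    simp [Pi.single_apply, eq_comm]
  refine ⟨fun θ ↦ ∑ i, h i θ * l (Pi.single i 1),
    ⟨integrable_finsetSum _ fun i _ ↦ (hh i).mul_const _, fun g hg G hG ↦ ?_⟩, ?_⟩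
  · rw [integral_eq (hM.memHinf g hg) hG]
    exact hker ⟨g, hg, G, hG, fun i ↦ rfl⟩
  · rwa [integral_eq hf hF]

theorem exists_isAnnihilator (hM : IsHinfSubspace M) (hclosed : HinfWStarClosure M ⊆ M)
    (hf : MemHinf f) (hfM : f ∉ M) (hF : BoundaryFn f F) :
    ∃ k, IsAnnihilator M k ∧ ∫ θ, F θ * k θ ∂arcM ≠ 0 := by
  contrapose! hfM
  refine hclosed ⟨hf, fun F' hF' n h hh ε hε ↦ ?_⟩
  have mem : (fun i ↦ ∫ θ, F' θ * h i θ ∂arcM) ∈ hM.testValues hh := by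
    by_contra hnot
    obtain ⟨k, hk, hne⟩ := hM.exists_isAnnihilator_of_notMem_testValues hh hf hF' hnot
    refine hne ((integral_congr_ae ?_).trans (hfM k hk))
    filter_upwards [hF'.ae_eq hF] with θ hθ
    rw [hθ]
  obtain ⟨g, hg, G, hG, hGF⟩ := mem
  refine ⟨g, hg, G, hG, fun i ↦ ?_⟩
  simp only [sub_mul]
  rw [integral_sub (hf.integrable_boundaryFn_mul hF' (hh i))
    ((hM.memHinf g hg).integrable_boundaryFn_mul hG (hh i)), hGF, sub_self, norm_zero]
  exact hε

end IsHinfSubspace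

/-! ### Shift-invariant subspaces of `L²` -/

lemma memLp_mul_bpt_zpow {u : ℝ → ℂ} {p : ℝ≥0∞} (hu : MemLp u p arcM) (n : ℤ) :
    MemLp (fun θ ↦ u θ * bpt θ ^ n) p arcM :=
  hu.of_le (hu.1.mul (continuous_bpt_zpow n).aestronglyMeasurable)
    (ae_of_all _ fun θ ↦ by rw [norm_mul, norm_bpt_zpow, mul_one])

/-- The operator of multiplication by `ζ ^ n` on `L²`; for `n = 1` it is the shift. -/
def zpowMul (n : ℤ) (u : Lp ℂ 2 arcM) : Lp ℂ 2 arcM :=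
  (memLp_mul_bpt_zpow (Lp.memLp u) n).toLp _

lemma coeFn_zpowMul (n : ℤ) (u : Lp ℂ 2 arcM) : zpowMul n u =ᵐ[arcM] fun θ ↦ u θ * bpt θ ^ n :=
  MemLp.coeFn_toLp _

lemma zpowMul_zero (u : Lp ℂ 2 arcM) : zpowMul 0 u = u := by
  refine Lp.ext ?_
  filter_upwards [coeFn_zpowMul 0 u] with θ hθ
  rw [hθ, zpow_zero, mul_one]

lemma zpowMul_zpowMul (m n : ℤ) (u : Lp ℂ 2 arcM) :
    zpowMul m (zpowMul n u) = zpowMul (n + m) u := by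
  refine Lp.ext ?_
  filter_upwards [coeFn_zpowMul m (zpowMul n u), coeFn_zpowMul n u, coeFn_zpowMul (n + m) u]
    with θ h₁ h₂ h₃
  rw [h₁, h₂, h₃, mul_assoc, zpow_add₀ (bpt_ne_zero θ)]

lemma arcCoeff_congr_ae {u v : ℝ → ℂ} (h : u =ᵐ[arcM] v) (n : ℤ) : arcCoeff u n = arcCoeff v n := by
  refine integral_congr_ae ?_
  filter_upwards [h] with θ hθ
  rw [hθ]

lemma arcCoeff_mul_bpt_zpow (u : ℝ → ℂ) (m n : ℤ) :
    arcCoeff (fun θ ↦ u θ * bpt θ ^ m) n = arcCoeff u (n - m) := by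
  simp only [arcCoeff]
  congr 1 with θ
  rw [neg_sub, sub_eq_add_neg, zpow_add₀ (bpt_ne_zero θ), mul_assoc]

lemma arcCoeff_zpowMul (m n : ℤ) (u : Lp ℂ 2 arcM) :
    arcCoeff (zpowMul m u) n = arcCoeff u (n - m) :=
  (arcCoeff_congr_ae (coeFn_zpowMul m u) n).trans (arcCoeff_mul_bpt_zpow u m n)

lemma inner_eq_integral_mul_conj {u v : ℝ → ℂ} {x y : Lp ℂ 2 arcM} (hx : x =ᵐ[arcM] u)
    (hy : y =ᵐ[arcM] v) : inner ℂ x y = ∫ θ, v θ * conj (u θ) ∂arcM := by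
  rw [L2.inner_def]
  refine integral_congr_ae ?_
  filter_upwards [hx, hy] with θ h₁ h₂
  rw [RCLike.inner_apply, h₁, h₂]

lemma inner_bpt_zpow {n : ℤ} {x : Lp ℂ 2 arcM} (hx : x =ᵐ[arcM] fun θ ↦ bpt θ ^ n)
    (u : Lp ℂ 2 arcM) : inner ℂ x u = arcCoeff u n := by
  rw [inner_eq_integral_mul_conj hx .rfl]
  simp only [map_zpow₀, conj_bpt, inv_zpow', arcCoeff]

lemma inner_zpowMul (n : ℤ) (u v : Lp ℂ 2 arcM) :
    inner ℂ v (zpowMul n u) = arcCoeff (fun θ ↦ u θ * conj (v θ)) (-n) := by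
  rw [inner_eq_integral_mul_conj .rfl (coeFn_zpowMul n u), arcCoeff, neg_neg]
  simp only [mul_right_comm]

lemma IsAnalyticType.ae_eq_const {u : ℝ → ℂ} (hu : IsAnalyticType u)
    (hreal : ∀ θ, conj (u θ) = u θ) : u =ᵐ[arcM] fun _ ↦ ∫ θ, u θ ∂arcM := by
  have coeff_eq_zero (n : ℤ) (hn : n ≠ 0) : arcCoeff u n = 0 := by
    rcases hn.lt_or_gt with hn | hn
    · exact hu.arcCoeff_eq_zero n hn
    · rw [← funext hreal, arcCoeff_conj, hu.arcCoeff_eq_zero (-n) (by lia), map_zero]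
  set c := ∫ θ, u θ ∂arcM with hc
  have hsub_zero : (fun θ ↦ u θ - c) =ᵐ[arcM] 0 := by
    refine ae_eq_zero_of_arcCoeff_eq_zero (hu.integrable.sub (integrable_const c)) fun n ↦ ?_
    have hsub : arcCoeff (fun θ ↦ u θ - c) n = arcCoeff u n - c * ∫ θ, bpt θ ^ (-n) ∂arcM := by
      simp only [arcCoeff, sub_mul]
      rw [integral_sub (integrable_mul_bpt_zpow hu.integrable _)
        (integrable_mul_bpt_zpow (integrable_const c) _), integral_const_mul]
    rcases eq_or_ne n 0 with rfl | hn
    · rw [hsub, arcCoeff_zero, ← hc]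
      simp
    · rw [hsub, coeff_eq_zero n hn, integral_bpt_zpow_of_ne_zero (neg_ne_zero.2 hn), mul_zero,
        sub_zero]
  filter_upwards [hsub_zero] with θ hθ using sub_eq_zero.1 hθ

section Beurling

variable {S : Submodule ℂ (Lp ℂ 2 arcM)}

lemma zpowMul_natCast_mem (hshift : ∀ u ∈ S, zpowMul 1 u ∈ S) {u : Lp ℂ 2 arcM} (hu : u ∈ S)
    (m : ℕ) : zpowMul m u ∈ S := by
  induction m with
  | zero => simpa only [Nat.cast_zero, zpowMul_zero] using hu
  | succ m ih => simpa only [zpowMul_zpowMul, Nat.cast_succ] using hshift _ ih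

lemma exists_least_arcCoeff_ne_zero (hS : S ≠ ⊥) (hanalytic : ∀ u ∈ S, IsAnalyticType u) :
    ∃ N, (∃ u ∈ S, arcCoeff u N ≠ 0) ∧ ∀ u ∈ S, ∀ n < N, arcCoeff u n = 0 := by
  obtain ⟨N, hN, hleast⟩ := Int.exists_least_of_bdd (P := fun n ↦ ∃ u ∈ S, arcCoeff u n ≠ 0)
    ⟨0, fun n ⟨u, hu, hne⟩ ↦ not_lt.1 fun hn ↦ hne ((hanalytic u hu).arcCoeff_eq_zero n hn)⟩ (by
      obtain ⟨u, hu, hne⟩ := S.exists_mem_ne_zero_of_ne_bot hS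
      contrapose! hne
      exact (Lp.eq_zero_iff_ae_eq_zero).2
        (ae_eq_zero_of_arcCoeff_eq_zero (hanalytic u hu).integrable fun n ↦ hne n u hu))
  refine ⟨N, hN, fun u hu n hn ↦ ?_⟩
  contrapose! hn
  exact hleast n ⟨u, hu, hn⟩

lemma exists_mem_inner_eq_arcCoeff [S.HasOrthogonalProjection] (N : ℤ) :
    ∃ v ∈ S, ∀ u ∈ S, inner ℂ v u = arcCoeff u N := by
  let x := (memLp_two_of_continuous (continuous_bpt_zpow N)).toLp _
  refine ⟨S.starProjection x, S.starProjection_apply_mem x, fun u hu ↦ ?_⟩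
  rw [← inner_bpt_zpow (MemLp.coeFn_toLp _), Submodule.inner_starProjection_left_eq_right,
    Submodule.starProjection_eq_self_iff.2 hu]

-- A multiple of the vector representing the lowest nonvanishing Fourier coefficient on `S` works:
-- the negative coefficients of `u * conj v` are multiples of still lower coefficients of `u`.
theorem exists_mem_norm_eq_one_isAnalyticType_mul_conj [S.HasOrthogonalProjection] (hS : S ≠ ⊥)
    (hshift : ∀ u ∈ S, zpowMul 1 u ∈ S) (hanalytic : ∀ u ∈ S, IsAnalyticType u) :
    ∃ v ∈ S, ‖v‖ = 1 ∧ ∀ u ∈ S, IsAnalyticType fun θ ↦ u θ * conj (v θ) := by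
  obtain ⟨N, ⟨u₀, hu₀, hne⟩, hlt⟩ := exists_least_arcCoeff_ne_zero hS hanalytic
  obtain ⟨v, hv, hinner⟩ := exists_mem_inner_eq_arcCoeff (S := S) N
  have hv0 : v ≠ 0 := by
    rintro rfl
    exact hne (by rw [← hinner u₀ hu₀, inner_zero_left])
  refine ⟨(‖v‖⁻¹ : ℂ) • v, S.smul_mem _ hv, norm_smul_inv_norm hv0, fun u hu ↦
    ⟨(Lp.memLp u).integrable_mul (Lp.memLp _).star, fun n hn ↦ ?_⟩⟩
  obtain ⟨m, rfl⟩ : ∃ m : ℕ, n = -m := ⟨n.natAbs, by lia⟩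
  rw [← inner_zpowMul, inner_smul_left, hinner _ (zpowMul_natCast_mem hshift hu m),
    arcCoeff_zpowMul, hlt u hu _ (by lia), mul_zero]

theorem exists_unimodular_mem_isAnalyticType_mul_conj [S.HasOrthogonalProjection] (hS : S ≠ ⊥)
    (hshift : ∀ u ∈ S, zpowMul 1 u ∈ S) (hanalytic : ∀ u ∈ S, IsAnalyticType u) :
    ∃ Θ ∈ S, (∀ᵐ θ ∂arcM, ‖Θ θ‖ = 1) ∧ ∀ u ∈ S, IsAnalyticType fun θ ↦ u θ * conj (Θ θ) := by
  obtain ⟨v, hv, hnorm, hmul⟩ :=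
    exists_mem_norm_eq_one_isAnalyticType_mul_conj hS hshift hanalytic
  have integral_eq_one : ∫ θ, v θ * conj (v θ) ∂arcM = 1 := by
    rw [← inner_eq_integral_mul_conj .rfl .rfl, inner_self_eq_norm_sq_to_K, hnorm]
    simp
  refine ⟨v, hv, ?_, hmul⟩
  filter_upwards [(hmul v hv).ae_eq_const fun θ ↦ by rw [map_mul, conj_conj, mul_comm]] with θ hθ
  rw [integral_eq_one, mul_conj, normSq_eq_norm_sq] at hθ
  exact (pow_eq_one_iff_of_nonneg (norm_nonneg _) two_ne_zero).1 (mod_cast hθ)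

end Beurling

lemma mem_orthogonal_span_iff {𝕜 E : Type*} [RCLike 𝕜] [NormedAddCommGroup E]
    [InnerProductSpace 𝕜 E] {s : Set E} {v : E} :
    v ∈ (Submodule.span 𝕜 s)ᗮ ↔ ∀ x ∈ s, inner 𝕜 x v = 0 := by
  refine ⟨fun h x hx ↦ h x (Submodule.subset_span hx), fun h x hx ↦ ?_⟩
  have hle : Submodule.span 𝕜 s ≤ (𝕜 ∙ v)ᗮ :=
    Submodule.span_le.2 fun y hy ↦ Submodule.mem_orthogonal_singleton_iff_inner_left.2 (h y hy)
  exact Submodule.mem_orthogonal_singleton_iff_inner_left.1 (hle hx)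

section HardyOrthogonal

variable {M : Set (ℂ → ℂ)} {u : Lp ℂ 2 arcM}

/-- The orthogonal complement of `M` in the Hardy space `H²`, both regarded as subspaces of `L²`:
`H²` is itself the orthogonal complement of the characters of negative index. -/
def hardyOrthogonal (M : Set (ℂ → ℂ)) : Submodule ℂ (Lp ℂ 2 arcM) :=
  (Submodule.span ℂ ({x | ∃ n < 0, x =ᵐ[arcM] fun θ ↦ bpt θ ^ (n : ℤ)} ∪
    {x | ∃ g ∈ M, BoundaryFn g x}))ᗮ

instance hasOrthogonalProjection_hardyOrthogonal :
    (hardyOrthogonal M).HasOrthogonalProjection := by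
  unfold hardyOrthogonal; infer_instance

lemma mem_hardyOrthogonal (hM : ∀ g ∈ M, MemHinf g) :
    u ∈ hardyOrthogonal M ↔ IsAnalyticType u ∧
      ∀ g ∈ M, ∀ G, BoundaryFn g G → ∫ θ, u θ * conj (G θ) ∂arcM = 0 := by
  rw [hardyOrthogonal, mem_orthogonal_span_iff]
  constructor
  · refine fun h ↦ ⟨⟨(Lp.memLp u).integrable one_le_two, fun n hn ↦ ?_⟩, fun g hg G hG ↦ ?_⟩
    · have hx := MemLp.coeFn_toLp (memLp_two_of_continuous (continuous_bpt_zpow n))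
      rw [← inner_bpt_zpow hx]
      exact h _ (.inl ⟨n, hn, hx⟩)
    · have hx := MemLp.coeFn_toLp ((hM g hg).memLp_boundaryFn hG 2)
      rw [← inner_eq_integral_mul_conj hx .rfl]
      exact h _ (.inr ⟨g, hg, hG.congr_ae hx.symm⟩)
  · rintro ⟨hanalytic, horth⟩ x (⟨n, hn, hx⟩ | ⟨g, hg, hx⟩)
    · rw [inner_bpt_zpow hx, hanalytic.arcCoeff_eq_zero n hn]
    · rw [inner_eq_integral_mul_conj .rfl .rfl, horth g hg x hx]

lemma zpowMul_one_mem_hardyOrthogonal (hM : ∀ g ∈ M, MemHinf g)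
    (hinv : ∀ g ∈ M, bShift g ∈ M) (hu : u ∈ hardyOrthogonal M) :
    zpowMul 1 u ∈ hardyOrthogonal M := by
  rw [mem_hardyOrthogonal hM] at hu ⊢
  obtain ⟨hanalytic, horth⟩ := hu
  refine ⟨⟨(Lp.memLp _).integrable one_le_two, fun n hn ↦ ?_⟩, fun g hg G hG ↦ ?_⟩
  · rw [arcCoeff_zpowMul]
    exact hanalytic.arcCoeff_eq_zero _ (by lia)
  have conj_bShift (θ : ℝ) : u θ * conj ((G θ - g 0) * (bpt θ)⁻¹)
      = u θ * bpt θ ^ (1 : ℤ) * conj (G θ) - u θ * bpt θ ^ (-(-1) : ℤ) * conj (g 0) := by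
    rw [← conj_bpt, map_mul, map_sub, conj_conj, neg_neg, zpow_one]
    ring
  have hint : Integrable (fun θ ↦ u θ * bpt θ ^ (1 : ℤ) * conj (G θ)) arcM :=
    (memLp_mul_bpt_zpow (Lp.memLp u) 1).integrable_mul ((hM g hg).memLp_boundaryFn hG 2).star
  calc ∫ θ, zpowMul 1 u θ * conj (G θ) ∂arcM
      = ∫ θ, u θ * bpt θ ^ (1 : ℤ) * conj (G θ) ∂arcM := by
        refine integral_congr_ae ?_
        filter_upwards [coeFn_zpowMul 1 u] with θ hθ
        rw [hθ]
    _ = ∫ θ, u θ * conj ((G θ - g 0) * (bpt θ)⁻¹) ∂arcM := by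
        simp only [conj_bShift]
        rw [integral_sub hint ((integrable_mul_bpt_zpow hanalytic.integrable _).mul_const _),
          integral_mul_const, ← arcCoeff, hanalytic.arcCoeff_eq_zero (-1) (by norm_num), zero_mul,
          sub_zero]
    _ = 0 := horth _ (hinv g hg) _ hG.bShift

end HardyOrthogonal

/-! ### Model spaces -/

lemma MemHinf.integral_boundaryFn_mul {f : ℂ → ℂ} {F u : ℝ → ℂ} (hf : MemHinf f)
    (hF : BoundaryFn f F) (hu : IsAnalyticType u) :
    ∫ θ, F θ * u θ ∂arcM = f 0 * ∫ θ, u θ ∂arcM := by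
  obtain ⟨C, hC⟩ := hf.2
  refine tendsto_nhds_unique
    (hF.tendsto_integral_mul_poissonIntegral hf.1.continuousOn hC hu.integrable)
    (tendsto_const_nhds.congr' ?_)
  filter_upwards [Ico_mem_nhdsLT zero_lt_one] with r hr
  simp only [hu.poissonIntegral_eq (mul_bpt_mem_uDisc hr _)]
  rw [AnalyticOnDisc.integral_mul_bpt (f := fun z ↦ f z * cauchyTransform u z)
    (hf.1.mul (analyticOnDisc_cauchyTransform hu.integrable)) hr, cauchyTransform_zero]

lemma isInner_cauchyTransform {Θ : ℝ → ℂ} (hΘ : IsAnalyticType Θ)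
    (hnorm : ∀ᵐ θ ∂arcM, ‖Θ θ‖ = 1) : IsInner (cauchyTransform Θ) :=
  ⟨hΘ.memHinf_cauchyTransform (hnorm.mono fun _ ↦ Eq.le), Θ, hΘ.boundaryFn_cauchyTransform, hnorm⟩

section Model

variable {ϑ f : ℂ → ℂ} {Θ F u : ℝ → ℂ}

lemma memKinf_of_arcCoeff_mul_conj_eq_zero (hΘ : BoundaryFn ϑ Θ) (hnorm : ∀ᵐ θ ∂arcM, ‖Θ θ‖ = 1)
    (hf : MemHinf f) (hF : BoundaryFn f F)
    (hcoeff : ∀ n ≤ 0, arcCoeff (fun θ ↦ Θ θ * conj (F θ)) n = 0)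
    (hint : Integrable (fun θ ↦ Θ θ * conj (F θ)) arcM) : MemKinf ϑ f := by
  have hG : IsAnalyticType fun θ ↦ Θ θ * conj (F θ) := ⟨hint, fun n hn ↦ hcoeff n hn.le⟩
  obtain ⟨C, hC⟩ := hf.2
  have hbound : ∀ᵐ θ ∂arcM, ‖Θ θ * conj (F θ)‖ ≤ C := by
    filter_upwards [hnorm, hF.norm_le hC] with θ h₁ h₂
    rwa [norm_mul, h₁, one_mul, RCLike.norm_conj]
  refine ⟨hf, F, Θ, _, _, hF, hΘ, hG.memHinf_cauchyTransform hbound, ?_,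
    hG.boundaryFn_cauchyTransform, ?_⟩
  · rw [cauchyTransform_zero, ← arcCoeff_zero, hcoeff 0 le_rfl]
  · filter_upwards [hnorm] with θ hθ
    rw [map_mul, conj_conj, ← mul_assoc, mul_conj, normSq_eq_norm_sq, hθ]
    simp

lemma MemKinf.integral_mul_conj_eq_zero (hf : MemKinf ϑ f) (hF : BoundaryFn f F)
    (hΘ : BoundaryFn ϑ Θ) (hu : IsAnalyticType fun θ ↦ u θ * conj (Θ θ)) :
    ∫ θ, F θ * conj (u θ) ∂arcM = 0 := by
  obtain ⟨-, F', Θ', G, g, hF', hΘ', hg, hg0, hG, hfactor⟩ := hf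
  calc ∫ θ, F θ * conj (u θ) ∂arcM
      = ∫ θ, conj (G θ * (u θ * conj (Θ θ))) ∂arcM := by
        refine integral_congr_ae ?_
        filter_upwards [hF.ae_eq hF', hΘ.ae_eq hΘ', hfactor] with θ h₁ h₂ h₃
        rw [h₁, h₃, h₂, map_mul, map_mul, conj_conj]
        ring
    _ = conj (g 0 * ∫ θ, u θ * conj (Θ θ) ∂arcM) := by
        rw [integral_conj, hg.integral_boundaryFn_mul hG hu]
    _ = 0 := by rw [hg0, zero_mul, map_zero]

end Model

section HardyOrthogonal

variable {M : Set (ℂ → ℂ)} {f : ℂ → ℂ} {F : ℝ → ℂ}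

lemma memKinf_of_mem_hardyOrthogonal {ϑ : ℂ → ℂ} {Θ : Lp ℂ 2 arcM} (hM : ∀ g ∈ M, MemHinf g)
    (hinv : ∀ g ∈ M, bShift g ∈ M) (hmem : Θ ∈ hardyOrthogonal M) (hΘ : BoundaryFn ϑ Θ)
    (hnorm : ∀ᵐ θ ∂arcM, ‖Θ θ‖ = 1) (hf : f ∈ M) : MemKinf ϑ f := by
  obtain ⟨F, hF⟩ := (hM f hf).exists_boundaryFn
  have hF₂ := (hM f hf).memLp_boundaryFn hF 2
  refine memKinf_of_arcCoeff_mul_conj_eq_zero hΘ hnorm (hM f hf) hF (fun n hn ↦ ?_)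
    ((Lp.memLp Θ).integrable_mul hF₂.star)
  obtain ⟨m, rfl⟩ : ∃ m : ℕ, n = -m := ⟨n.natAbs, by lia⟩
  have hshift := zpowMul_natCast_mem (fun u ↦ zpowMul_one_mem_hardyOrthogonal hM hinv) hmem m
  rw [← ((mem_hardyOrthogonal hM).1 hshift).2 f hf F hF]
  refine integral_congr_ae ?_
  filter_upwards [coeFn_zpowMul m Θ] with θ hθ
  rw [hθ, neg_neg, mul_right_comm]

theorem IsHinfSubspace.exists_mem_hardyOrthogonal (hM : IsHinfSubspace M)
    (hclosed : HinfWStarClosure M ⊆ M) (hinv : ∀ g ∈ M, bShift g ∈ M) (hf : MemHinf f)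
    (hfM : f ∉ M) (hF : BoundaryFn f F) :
    ∃ u ∈ hardyOrthogonal M, ∫ θ, F θ * conj (u θ) ∂arcM ≠ 0 := by
  obtain ⟨k, hk, hFk⟩ := hM.exists_isAnnihilator hclosed hf hfM hF
  obtain ⟨p, P, hp, hP, horth, hne⟩ := hk.exists_memHinf hM.memHinf hinv hf hF hFk
  let u := (hp.memLp_boundaryFn hP 2).toLp P
  have hu : u =ᵐ[arcM] P := MemLp.coeFn_toLp _
  refine ⟨u, (mem_hardyOrthogonal hM.memHinf).2
    ⟨hp.isAnalyticType_boundaryFn (hP.congr_ae hu.symm), fun g hg G hG ↦ ?_⟩, ?_⟩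
  · have hconj := congrArg conj (horth g hg G hG)
    rw [← integral_conj, map_zero] at hconj
    refine (integral_congr_ae ?_).trans hconj
    filter_upwards [hu] with θ hθ
    rw [hθ, map_mul, conj_conj, mul_comm]
  · refine fun h0 ↦ hne ((integral_congr_ae ?_).trans h0)
    filter_upwards [hu] with θ hθ
    rw [hθ]

theorem IsHinfSubspace.hardyOrthogonal_ne_bot (hM : IsHinfSubspace M)
    (hclosed : HinfWStarClosure M ⊆ M) (hinv : ∀ g ∈ M, bShift g ∈ M) (hf : MemHinf f)
    (hfM : f ∉ M) : hardyOrthogonal M ≠ ⊥ := by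
  obtain ⟨F, hF⟩ := hf.exists_boundaryFn
  obtain ⟨u, hu, hne⟩ := hM.exists_mem_hardyOrthogonal hclosed hinv hf hfM hF
  refine (Submodule.ne_bot_iff _).2 ⟨u, hu, ?_⟩
  rintro rfl
  exact hne (by simp)

end HardyOrthogonal

/-- Proposition 2.3: every proper weak-star closed subspace of `H^∞`
invariant under the backward shift `f ↦ (f - f(0))/z` is of the form `K^∞_ϑ` for some
inner function `ϑ`. -/
theorem wstar_closed_invariant_subspace_Hinf (M : Set (ℂ → ℂ))
    (hsub : ∀ f ∈ M, MemHinf f)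
    (hzero : (fun _ : ℂ => (0 : ℂ)) ∈ M)
    (hadd : ∀ f ∈ M, ∀ g ∈ M, (fun z => f z + g z) ∈ M)
    (hsmul : ∀ c : ℂ, ∀ f ∈ M, (fun z => c * f z) ∈ M)
    (hclosed : HinfWStarClosure M ⊆ M)
    (hproper : ∃ f : ℂ → ℂ, MemHinf f ∧ f ∉ M)
    (hinv : ∀ f ∈ M, bShift f ∈ M) :
    ∃ ϑ : ℂ → ℂ, IsInner ϑ ∧ M = {f | MemKinf ϑ f} := by
  have hM : IsHinfSubspace M := ⟨hsub, hzero, hadd, hsmul⟩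
  obtain ⟨f₀, hf₀, hf₀M⟩ := hproper
  obtain ⟨Θ, hΘM, hnorm, hmul⟩ := exists_unimodular_mem_isAnalyticType_mul_conj
    (hM.hardyOrthogonal_ne_bot hclosed hinv hf₀ hf₀M)
    (fun u ↦ zpowMul_one_mem_hardyOrthogonal hsub hinv)
    fun u hu ↦ ((mem_hardyOrthogonal hsub).1 hu).1
  have hΘ : IsAnalyticType Θ := ((mem_hardyOrthogonal hsub).1 hΘM).1
  have hboundary := hΘ.boundaryFn_cauchyTransform
  refine ⟨cauchyTransform Θ, isInner_cauchyTransform hΘ hnorm, Subset.antisymm (fun f hf ↦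
    memKinf_of_mem_hardyOrthogonal hsub hinv hΘM hboundary hnorm hf) fun f hf ↦ ?_⟩
  by_contra hfM
  obtain ⟨F, hF⟩ := hf.1.exists_boundaryFn
  obtain ⟨u, hu, hne⟩ := hM.exists_mem_hardyOrthogonal hclosed hinv hf.1 hfM hF
  exact hne (hf.integral_mul_conj_eq_zero hF hboundary (hmul u hu))
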